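/- Let ℓ be an odd prime and n ≥ 2 an integer. Let X be the (finite) set of finitely supported functions w assigning to each quadruple (a, x, 𝔠, j) — where a ∈ ℕ, x ∈ {0,1}, 𝔠 ∈ 𝒞 and 1 ≤ j ≤ (ℓ−1)^{t(𝔠)} — an ℓ-core partition, subject to Σ_{(a,x,𝔠,j)} ℓ^{a+|𝔠|} · |w(a,x,𝔠,j)| = n. Let σ: X → X be the involution defined by (σw)(a,x,𝔠,j) = w(a,1−x,𝔠,j), and let F be the number of fixed points of σ on X. Then 2F + (|X| − F)/2 equals the number of conjugacy classes of the group of n×n signed permutation matrices having an even number of entries equal to −1 (the Weyl group of type D_n). (This is the combinatorial content of the weight count for the fusion system of the compact Lie group SO(2n) at an odd prime ℓ.) -/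

import Mathlib

open Matrix

/-- The sum `|𝔠| = c₁ + ⋯ + c_t` of a finite sequence `𝔠` of strictly positive integers. -/
def csum (c : List ℕ+) : ℕ := (c.map fun x => (x : ℕ)).sum

/-- The beta-set (set of first-column hook lengths) of a partition `p`, computed with `N`
beads: if the parts of `p` in decreasing order (padded with zeros to length `N`) are
`λ₁ ≥ λ₂ ≥ … ≥ λ_N`, then `betaSet p N = {λ₁ + N - 1, λ₂ + N - 2, …, λ_N}`. -/
def betaSet {n : ℕ} (p : Nat.Partition n) (N : ℕ) : Finset ℕ :=
  (Finset.range N).image fun i => ((p.parts.sort (· ≥ ·)).getD i 0) + (N - 1 - i)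

/-- A partition is an `ℓ`-core if (for every `N` at least the number of parts) its beta-set
`B` on `N` beads satisfies: every `b ∈ B` with `b ≥ ℓ` has `b - ℓ ∈ B`.  This is equivalent
to the Young diagram having no hook of length `ℓ`. -/
def IsCore (ℓ : ℕ) {n : ℕ} (p : Nat.Partition n) : Prop :=
  ∀ N : ℕ, Multiset.card p.parts ≤ N →
    ∀ b ∈ betaSet p N, ℓ ≤ b → b - ℓ ∈ betaSet p N

/-- A signed permutation matrix: exactly one nonzero entry in each row and each column,
each nonzero entry being `1` or `-1`. -/
def IsSignedPerm {n : ℕ} (M : Matrix (Fin n) (Fin n) ℤ) : Prop :=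
  (∀ i j, M i j = 0 ∨ M i j = 1 ∨ M i j = -1) ∧
  (∀ i, ∃! j, M i j ≠ 0) ∧ (∀ j, ∃! i, M i j ≠ 0)

/-- A signed permutation matrix with an even number of entries equal to `-1`
(an element of the Weyl group of type `D_n`). -/
def IsWeylD {n : ℕ} (M : Matrix (Fin n) (Fin n) ℤ) : Prop :=
  IsSignedPerm M ∧
    Even (Finset.univ.filter fun p : Fin n × Fin n => M p.1 p.2 = -1).card

/-- The index-flipping involution `(a, x, 𝔠, j) ↦ (a, 1 - x, 𝔠, j)`. -/
def flipIdx (ℓ : ℕ) :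
    (ℕ × Fin 2 × Σ c : List ℕ+, Fin ((ℓ - 1) ^ c.length)) →
      ℕ × Fin 2 × Σ c : List ℕ+, Fin ((ℓ - 1) ^ c.length) :=
  fun i => (i.1, 1 - i.2.1, i.2.2)


namespace WC

/-- The `i`-th largest part. -/
def seqP {n : ℕ} (p : Nat.Partition n) (i : ℕ) : ℕ := (p.parts.sort (· ≥ ·)).getD i 0

theorem seqP_anti {n : ℕ} (p : Nat.Partition n) : Antitone (seqP p) := by
  intro i j hij
  unfold seqP
  have hs : (p.parts.sort (· ≥ ·)).Pairwise (· ≥ ·) := Multiset.pairwise_sort _ _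
  set L := p.parts.sort (· ≥ ·)
  by_cases hj : j < L.length
  · rw [List.getD_eq_getElem _ _ hj, List.getD_eq_getElem _ _ (lt_of_le_of_lt hij hj)]
    rcases eq_or_lt_of_le hij with h | h
    · subst h; exact le_rfl
    · exact List.pairwise_iff_getElem.1 hs i j _ _ h
  · rw [List.getD_eq_default _ _ (by omega)]; exact Nat.zero_le _

theorem seqP_zero {n : ℕ} (p : Nat.Partition n) {i : ℕ} (h : Multiset.card p.parts ≤ i) :
    seqP p i = 0 := by
  unfold seqP
  rw [List.getD_eq_default]; simpa using h

theorem seqP_pos {n : ℕ} (p : Nat.Partition n) {i : ℕ} (h : i < Multiset.card p.parts) :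
    0 < seqP p i := by
  unfold seqP
  rw [List.getD_eq_getElem _ _ (by simpa using h)]
  apply p.parts_pos
  rw [← Multiset.mem_sort (r := (· ≥ ·))]
  exact List.getElem_mem _

theorem parts_eq {n : ℕ} (p : Nat.Partition n) :
    p.parts = ((List.range (Multiset.card p.parts)).map (seqP p) : List ℕ) := by
  conv_lhs => rw [← Multiset.sort_eq p.parts (· ≥ ·)]
  congr 1
  apply List.ext_getElem
  · simp
  · intro i h1 h2
    simp only [List.getElem_map, List.getElem_range]
    unfold seqP
    rw [List.getD_eq_getElem]

theorem size_eq {n : ℕ} (p : Nat.Partition n) {N : ℕ} (h : Multiset.card p.parts ≤ N) :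
    ∑ i ∈ Finset.range N, seqP p i = n := by
  have h1 : ∑ i ∈ Finset.range (Multiset.card p.parts), seqP p i = n := by
    conv_rhs => rw [← p.parts_sum]
    conv_rhs => rw [parts_eq p]
    rfl
  refine Eq.trans ?_ h1
  symm
  apply Finset.sum_subset
  · intro x; simp; omega
  · intro x _ hx
    apply seqP_zero; simpa using hx

abbrev PT := Σ m : ℕ, Nat.Partition m

theorem PT_ext {p q : PT} (h : p.2.parts = q.2.parts) : p = q := by
  obtain ⟨m, p⟩ := p
  obtain ⟨m', q⟩ := q
  have : m = m' := by rw [← p.parts_sum, ← q.parts_sum]; exact congrArg _ h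
  subst this
  congr 1
  exact Nat.Partition.ext h

theorem PT_ext_seq {p q : PT} (h : ∀ i, seqP p.2 i = seqP q.2 i) : p = q := by
  apply PT_ext
  have hc : Multiset.card p.2.parts = Multiset.card q.2.parts := by
    by_contra hne
    rcases lt_or_gt_of_ne hne with h1 | h1
    · have := seqP_pos q.2 h1
      rw [← h, seqP_zero p.2 le_rfl] at this
      exact lt_irrefl _ this
    · have := seqP_pos p.2 h1
      rw [h, seqP_zero q.2 le_rfl] at this
      exact lt_irrefl _ this
  rw [parts_eq p.2, parts_eq q.2, hc]
  congr 1
  apply List.map_congr_left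
  intro i _
  exact h i

theorem exists_seq (g : ℕ → ℕ) (hg : Antitone g) (N : ℕ) (hN : g N = 0) :
    ∃ p : PT, Multiset.card p.2.parts ≤ N ∧ ∀ i, seqP p.2 i = g i := by
  classical
  have hex : ∃ k, g k = 0 := ⟨N, hN⟩
  set k := Nat.find hex with hk
  have hk0 : g k = 0 := Nat.find_spec hex
  have hlt : ∀ i < k, 0 < g i := fun i hi => Nat.pos_of_ne_zero (Nat.find_min hex hi)
  let L := (List.range k).map g
  refine ⟨⟨L.sum, ⟨(L : Multiset ℕ), ?_, ?_⟩⟩, ?_, ?_⟩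
  · intro i hi
    simp only [Multiset.mem_coe, L, List.mem_map, List.mem_range] at hi
    obtain ⟨j, hj, rfl⟩ := hi
    exact hlt j hj
  · simp
  · have hkN : k ≤ N := Nat.find_min' hex hN
    simpa [L] using hkN
  · intro i
    unfold seqP
    have hsort : (Multiset.sort (L : Multiset ℕ) (· ≥ ·)) = L := by
      rw [Multiset.coe_sort]
      apply List.mergeSort_of_pairwise
      rw [List.pairwise_map]
      refine List.Pairwise.imp ?_ List.pairwise_lt_range
      intro a b hab
      simpa using hg hab.le
    rw [hsort]
    by_cases hi : i < k
    · rw [List.getD_eq_getElem _ _ (by simpa [L] using hi)]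
      simp [L]
    · rw [List.getD_eq_default _ _ (by simpa [L] using hi)]
      have := hg (not_lt.1 hi)
      omega

theorem mem_beta {n : ℕ} (p : Nat.Partition n) (N x : ℕ) :
    x ∈ betaSet p N ↔ ∃ i < N, seqP p i + (N - 1 - i) = x := by
  simp [betaSet, seqP]

theorem beta_injOn {n : ℕ} (p : Nat.Partition n) (N : ℕ) :
    ∀ i < N, ∀ j < N, seqP p i + (N - 1 - i) = seqP p j + (N - 1 - j) → i = j := by
  intro i hi j hj h
  rcases lt_trichotomy i j with h1 | h1 | h1
  · have := seqP_anti p h1.le; omega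
  · exact h1
  · have := seqP_anti p h1.le; omega

theorem beta_card {n : ℕ} (p : Nat.Partition n) (N : ℕ) : (betaSet p N).card = N := by
  unfold betaSet
  rw [Finset.card_image_of_injOn, Finset.card_range]
  intro i hi j hj h
  exact beta_injOn p N i (by simpa using hi) j (by simpa using hj) h

theorem beta_sum {n : ℕ} (p : Nat.Partition n) {N : ℕ} (h : Multiset.card p.parts ≤ N) :
    ∑ x ∈ betaSet p N, x = n + ∑ i ∈ Finset.range N, i := by
  unfold betaSet
  rw [Finset.sum_image]
  · rw [Finset.sum_add_distrib, Finset.sum_range_reflect (fun i => i)]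
    congr 1
    exact size_eq p h
  · intro i hi j hj h
    exact beta_injOn p N i (by simpa using hi) j (by simpa using hj) h

theorem beta_enum {n : ℕ} (p : Nat.Partition n) {N : ℕ} {B : Finset ℕ} (hB : B.card = N)
    (h : betaSet p N = B) (i : Fin N) :
    seqP p (N - 1 - i) + i = B.orderEmbOfFin hB i := by
  have := Finset.orderEmbOfFin_unique hB (f := fun i : Fin N => seqP p (N - 1 - i) + i) ?_ ?_
  · exact congrFun this i
  · intro x
    rw [← h, mem_beta]
    exact ⟨N - 1 - x, by omega, by congr 1; omega⟩
  · intro a b hab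
    have h1 : (a : ℕ) < b := hab
    have := seqP_anti p (show N - 1 - (b : ℕ) ≤ N - 1 - a by omega)
    simp only
    omega

theorem beta_inj {p q : PT} {N : ℕ} (hp : Multiset.card p.2.parts ≤ N)
    (hq : Multiset.card q.2.parts ≤ N) (h : betaSet p.2 N = betaSet q.2 N) : p = q := by
  apply PT_ext_seq
  intro i
  by_cases hi : i < N
  · have h1 := beta_enum p.2 (beta_card q.2 N) h ⟨N - 1 - i, by omega⟩
    have h2 := beta_enum q.2 (beta_card q.2 N) rfl ⟨N - 1 - i, by omega⟩
    rw [← h2] at h1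
    simp only at h1
    rw [show N - 1 - (N - 1 - i) = i by omega] at h1
    omega
  · rw [seqP_zero _ (by omega), seqP_zero _ (by omega)]

theorem beta_surj (B : Finset ℕ) :
    ∃ p : PT, Multiset.card p.2.parts ≤ B.card ∧ betaSet p.2 B.card = B := by
  classical
  set N := B.card with hN
  let f := B.orderEmbOfFin hN.symm
  have hf : ∀ (i j : ℕ) (hi : i < N) (hj : j < N), i ≤ j → f ⟨i, hi⟩ + (j - i) ≤ f ⟨j, hj⟩ := by
    intro i j hi hj hij
    induction j, hij using Nat.le_induction with
    | base => simp
    | succ j hij ih =>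
      have h1 := ih (by omega)
      have h2 : f ⟨j, by omega⟩ < f ⟨j + 1, hj⟩ := f.strictMono (by simp)
      omega
  have hf0 : ∀ (j : ℕ) (hj : j < N), j ≤ f ⟨j, hj⟩ := by
    intro j hj
    have := hf 0 j (by omega) hj (by omega)
    omega
  let g : ℕ → ℕ := fun i => if h : i < N then f ⟨N - 1 - i, by omega⟩ - (N - 1 - i) else 0
  have hg : Antitone g := by
    intro i j hij
    simp only [g]
    by_cases hj : j < N
    · rw [dif_pos hj, dif_pos (by omega)]
      have := hf (N - 1 - j) (N - 1 - i) (by omega) (by omega) (by omega)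
      omega
    · rw [dif_neg hj]; exact Nat.zero_le _
  obtain ⟨p, hp, hpg⟩ := exists_seq g hg N (by simp [g])
  refine ⟨p, hp, ?_⟩
  apply Finset.eq_of_subset_of_card_le
  · intro x hx
    rw [mem_beta] at hx
    obtain ⟨i, hi, rfl⟩ := hx
    rw [hpg]
    simp only [g, dif_pos hi]
    have := hf0 (N - 1 - i) (by omega)
    rw [Nat.sub_add_cancel this]
    exact Finset.orderEmbOfFin_mem _ _ _
  · rw [beta_card]

theorem beta_low {n : ℕ} (p : Nat.Partition n) {N x : ℕ} (h : x + Multiset.card p.parts < N) :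
    x ∈ betaSet p N := by
  rw [mem_beta]
  refine ⟨N - 1 - x, by omega, ?_⟩
  rw [seqP_zero p (by omega)]
  omega

theorem beta_shift {n : ℕ} (p : Nat.Partition n) {N x : ℕ} :
    x + 1 ∈ betaSet p (N + 1) ↔ x ∈ betaSet p N ∨ (x + 1 = seqP p N):= by
  rw [mem_beta, mem_beta]
  constructor
  · rintro ⟨i, hi, h⟩
    by_cases h' : i < N
    · left; exact ⟨i, h', by omega⟩
    · right
      have : i = N := by omega
      subst this
      omega
  · rintro (⟨i, hi, h⟩ | h)
    · exact ⟨i, by omega, by omega⟩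
    · exact ⟨N, by omega, by omega⟩

/-- Core condition on bead sets. -/
def CoreSet (ℓ : ℕ) (B : Finset ℕ) : Prop := ∀ b ∈ B, ℓ ≤ b → b - ℓ ∈ B

theorem coreSet_succ {n : ℕ} (ℓ : ℕ) (hℓ : 0 < ℓ) (p : Nat.Partition n) {N : ℕ}
    (h : Multiset.card p.parts ≤ N) :
    CoreSet ℓ (betaSet p (N + 1)) ↔ CoreSet ℓ (betaSet p N) := by
  have h0 := seqP_zero p h
  have hs : ∀ x, x + 1 ∈ betaSet p (N + 1) ↔ x ∈ betaSet p N := by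
    intro x
    rw [beta_shift, h0]; simp
  have hz : 0 ∈ betaSet p (N + 1) := by
    rw [mem_beta]; exact ⟨N, by omega, by omega⟩
  constructor
  · intro H b hb hle
    have := H (b + 1) ((hs b).2 hb) (by omega)
    rw [show b + 1 - ℓ = (b - ℓ) + 1 by omega, hs] at this
    exact this
  · intro H b hb hle
    obtain ⟨b', rfl⟩ : ∃ b', b = b' + 1 := ⟨b - 1, by omega⟩
    rw [hs] at hb
    by_cases h1 : ℓ ≤ b'
    · rw [show b' + 1 - ℓ = (b' - ℓ) + 1 by omega, hs]
      exact H b' hb h1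
    · rw [show b' + 1 - ℓ = 0 by omega]
      exact hz

theorem isCore_iff {n : ℕ} (ℓ : ℕ) (hℓ : 0 < ℓ) (p : Nat.Partition n) {N : ℕ}
    (h : Multiset.card p.parts ≤ N) :
    IsCore ℓ p ↔ CoreSet ℓ (betaSet p N) := by
  have key : ∀ M, Multiset.card p.parts ≤ M →
      (CoreSet ℓ (betaSet p M) ↔ CoreSet ℓ (betaSet p (Multiset.card p.parts))) := by
    intro M hM
    induction M, hM using Nat.le_induction with
    | base => rfl
    | succ M hM ih => rw [coreSet_succ ℓ hℓ p hM, ih]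
  constructor
  · intro H; exact H N h
  · intro H M hM
    have := (key M hM).2 ((key N h).1 H)
    exact this

theorem card_parts_le {n : ℕ} (p : Nat.Partition n) : Multiset.card p.parts ≤ n := by
  have := Multiset.card_nsmul_le_sum (s := p.parts) (a := 1) (fun x hx => p.parts_pos hx)
  simpa [p.parts_sum] using this

end WC

namespace WC

section split
variable (ℓ : ℕ)

/-- Runner `r` of the abacus. -/
def runner (B : Finset ℕ) (r : Fin ℓ) : Finset ℕ :=
  (B.filter fun x => x % ℓ = r).image fun x => x / ℓ

/-- Reassemble the runners. -/
def glue (S : Fin ℓ → Finset ℕ) : Finset ℕ :=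
  (Finset.univ.sigma S).image fun x => ℓ * x.2 + x.1

theorem mem_runner {B : Finset ℕ} {r : Fin ℓ} {q : ℕ} :
    q ∈ runner ℓ B r ↔ ℓ * q + r ∈ B := by
  have hr := r.2
  simp only [runner, Finset.mem_image, Finset.mem_filter]
  constructor
  · rintro ⟨x, ⟨hx, h1⟩, rfl⟩
    rw [← h1, Nat.div_add_mod]; exact hx
  · intro h
    refine ⟨_, ⟨h, ?_⟩, ?_⟩
    · rw [Nat.mul_add_mod, Nat.mod_eq_of_lt hr]
    · rw [Nat.mul_add_div (by omega), Nat.div_eq_of_lt hr, add_zero]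

theorem glue_inj : Function.Injective (fun x : Σ _ : Fin ℓ, ℕ => ℓ * x.2 + x.1) := by
  rintro ⟨r, q⟩ ⟨r', q'⟩ h
  simp only at h
  have hr := r.2
  have hr' := r'.2
  have h1 : (r : ℕ) = r' := by
    have := congrArg (· % ℓ) h
    simpa [Nat.mul_add_mod, Nat.mod_eq_of_lt hr, Nat.mod_eq_of_lt hr'] using this
  have h2 : q = q' := by
    rw [h1] at h
    exact Nat.eq_of_mul_eq_mul_left (by omega : 0 < ℓ) (by omega)
  have h3 : r = r' := Fin.ext h1
  subst h3 h2; rfl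

theorem mem_glue {S : Fin ℓ → Finset ℕ} {r : Fin ℓ} {q : ℕ} :
    ℓ * q + r ∈ glue ℓ S ↔ q ∈ S r := by
  simp only [glue, Finset.mem_image, Finset.mem_sigma, Finset.mem_univ, true_and]
  constructor
  · rintro ⟨x, hx, h⟩
    have := glue_inj ℓ (a₁ := x) (a₂ := ⟨r, q⟩) h
    subst this; exact hx
  · intro h; exact ⟨⟨r, q⟩, h, rfl⟩

theorem runner_glue (S : Fin ℓ → Finset ℕ) (r : Fin ℓ) : runner ℓ (glue ℓ S) r = S r := by
  ext q; rw [mem_runner, mem_glue]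

theorem glue_runner (hℓ : 0 < ℓ) (B : Finset ℕ) : glue ℓ (runner ℓ B) = B := by
  ext x
  have : x = ℓ * (x / ℓ) + (⟨x % ℓ, Nat.mod_lt _ hℓ⟩ : Fin ℓ) := by
    simp [Nat.div_add_mod]
  rw [this, mem_glue, mem_runner]

theorem glue_card (S : Fin ℓ → Finset ℕ) : (glue ℓ S).card = ∑ r, (S r).card := by
  rw [glue, Finset.card_image_of_injective _ (glue_inj ℓ), Finset.card_sigma]

theorem glue_sum (S : Fin ℓ → Finset ℕ) :
    ∑ x ∈ glue ℓ S, x = ∑ r : Fin ℓ, (ℓ * ∑ x ∈ S r, x + (S r).card * r) := by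
  rw [glue, Finset.sum_image (fun a _ b _ h => glue_inj ℓ h), Finset.sum_sigma]
  refine Finset.sum_congr rfl fun r _ => ?_
  simp [Finset.sum_add_distrib, Finset.mul_sum]

theorem range_of_down {S : Finset ℕ} (h : ∀ x, x + 1 ∈ S → x ∈ S) : S = Finset.range S.card := by
  have hd : ∀ k x, x + k ∈ S → x ∈ S := by
    intro k
    induction k with
    | zero => simp
    | succ k ih => intro x hx; exact ih x (h _ hx)
  have hsub : S ⊆ Finset.range S.card := by
    intro x hx
    have : Finset.range (x + 1) ⊆ S := by
      intro y hy
      simp only [Finset.mem_range] at hy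
      exact hd (x - y) y (by rwa [show y + (x - y) = x by omega])
    have := Finset.card_le_card this
    simp at this ⊢
    omega
  exact Finset.eq_of_subset_of_card_le hsub (by simp)

theorem coreSet_runner {B : Finset ℕ} (h : CoreSet ℓ B) (r : Fin ℓ) :
    runner ℓ B r = Finset.range (runner ℓ B r).card := by
  apply range_of_down
  intro x hx
  rw [mem_runner] at hx ⊢
  have := h _ hx (by nlinarith)
  rwa [show ℓ * (x + 1) + (r : ℕ) - ℓ = ℓ * x + r by rw [mul_add]; omega] at this

theorem coreSet_glue (hℓ : 0 < ℓ) (N : Fin ℓ → ℕ) : CoreSet ℓ (glue ℓ fun r => Finset.range (N r)) := by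
  intro b hb hle
  have hb' : b = ℓ * (b / ℓ) + (⟨b % ℓ, Nat.mod_lt _ hℓ⟩ : Fin ℓ) := by
    simp [Nat.div_add_mod]
  have h1 : 1 ≤ b / ℓ := (Nat.one_le_div_iff hℓ).2 hle
  have hb2 : b - ℓ = ℓ * (b / ℓ - 1) + (⟨b % ℓ, Nat.mod_lt _ hℓ⟩ : Fin ℓ) := by
    rw [Nat.mul_sub, mul_one]
    have : ℓ * 1 ≤ ℓ * (b / ℓ) := Nat.mul_le_mul_left _ h1
    omega
  rw [hb', mem_glue] at hb
  rw [hb2, mem_glue]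
  simp at hb ⊢
  omega

end split

/-- The partition with a given beta-set. -/
noncomputable def toP (B : Finset ℕ) : PT := (beta_surj B).choose

theorem toP_card (B : Finset ℕ) : Multiset.card (toP B).2.parts ≤ B.card :=
  (beta_surj B).choose_spec.1

theorem toP_beta (B : Finset ℕ) : betaSet (toP B).2 B.card = B :=
  (beta_surj B).choose_spec.2

theorem toP_of_beta (p : PT) {N : ℕ} (h : Multiset.card p.2.parts ≤ N) :
    toP (betaSet p.2 N) = p := by
  have h1 := toP_card (betaSet p.2 N)
  have h2 := toP_beta (betaSet p.2 N)
  rw [beta_card] at h1 h2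
  exact beta_inj h1 h h2

theorem toP_sum (B : Finset ℕ) : ∑ x ∈ B, x = (toP B).1 + ∑ i ∈ Finset.range B.card, i := by
  have := beta_sum (toP B).2 (toP_card B)
  rwa [toP_beta] at this

/-- Cores. -/
abbrev CoreT (ℓ : ℕ) := {c : PT // IsCore ℓ c.2}

theorem toP_core (ℓ : ℕ) (hℓ : 0 < ℓ) {B : Finset ℕ} (h : CoreSet ℓ B) : IsCore ℓ (toP B).2 := by
  rw [isCore_iff ℓ hℓ _ (toP_card B), toP_beta]; exact h

theorem size_glue (ℓ : ℕ) (S : Fin ℓ → Finset ℕ) :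
    (toP (glue ℓ S)).1 = (toP (glue ℓ fun r => Finset.range (S r).card)).1
      + ℓ * ∑ r, (toP (S r)).1 := by
  have h1 := toP_sum (glue ℓ S)
  have h2 := toP_sum (glue ℓ fun r => Finset.range (S r).card)
  rw [glue_card, glue_sum] at h1 h2
  simp only [Finset.card_range] at h2
  have h3 : ∑ r : Fin ℓ, (ℓ * ∑ x ∈ S r, x + (S r).card * r) = ℓ * ∑ r, (toP (S r)).1 +
      ∑ r : Fin ℓ, (ℓ * ∑ x ∈ Finset.range (S r).card, x + (S r).card * r) := by
    rw [Finset.mul_sum, ← Finset.sum_add_distrib]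
    refine Finset.sum_congr rfl fun r _ => ?_
    rw [toP_sum (S r)]; ring
  omega

theorem core_quot_fiber (ℓ : ℕ) (hℓ : 0 < ℓ) (n : ℕ) :
    Nonempty ({p : PT // p.1 = n} ≃
      {x : CoreT ℓ × (Fin ℓ → PT) // x.1.1.1 + ℓ * ∑ r, (x.2 r).1 = n}) := by
  set N := n + ℓ * n with hN
  have hcN : ∀ p : {p : PT // p.1 = n}, Multiset.card p.1.2.parts ≤ N := by
    intro p
    have := card_parts_le p.1.2
    have := p.2
    omega
  let f : {p : PT // p.1 = n} → CoreT ℓ × (Fin ℓ → PT) := fun p =>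
    (⟨toP (glue ℓ fun r => Finset.range (runner ℓ (betaSet p.1.2 N) r).card),
      toP_core ℓ hℓ (coreSet_glue ℓ hℓ _)⟩, fun r => toP (runner ℓ (betaSet p.1.2 N) r))
  have hf : ∀ p, (f p).1.1.1 + ℓ * ∑ r, ((f p).2 r).1 = n := by
    intro p
    have := size_glue ℓ (runner ℓ (betaSet p.1.2 N))
    rw [glue_runner ℓ hℓ, toP_of_beta _ (hcN p)] at this
    exact this.symm.trans p.2
  refine ⟨Equiv.ofBijective (fun p => ⟨f p, hf p⟩) ⟨?_, ?_⟩⟩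
  · intro p q h
    have h0 : f p = f q := congrArg Subtype.val h
    have h1 := congrArg (fun x => x.1.1) h0
    have h2 := congrArg (fun x => x.2) h0
    simp only [f] at h1 h2
    have hc : ∀ p : {p : PT // p.1 = n},
        (glue ℓ fun r => Finset.range (runner ℓ (betaSet p.1.2 N) r).card).card = N := by
      intro p
      rw [glue_card]
      simp only [Finset.card_range]
      rw [← glue_card, glue_runner ℓ hℓ, beta_card]
    have h3 : (glue ℓ fun r => Finset.range (runner ℓ (betaSet p.1.2 N) r).card)
        = (glue ℓ fun r => Finset.range (runner ℓ (betaSet q.1.2 N) r).card) := by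
      rw [← toP_beta (glue ℓ fun r => Finset.range (runner ℓ (betaSet p.1.2 N) r).card),
        ← toP_beta (glue ℓ fun r => Finset.range (runner ℓ (betaSet q.1.2 N) r).card),
        hc p, hc q, h1]
    have h4 : ∀ r, (runner ℓ (betaSet p.1.2 N) r).card = (runner ℓ (betaSet q.1.2 N) r).card := by
      intro r
      have := congrArg (fun B => (runner ℓ B r).card) h3
      simpa [runner_glue] using this
    have h5 : runner ℓ (betaSet p.1.2 N) = runner ℓ (betaSet q.1.2 N) := by
      funext r
      have h6 := congrFun h2 r
      rw [← toP_beta (runner ℓ (betaSet p.1.2 N) r), ← toP_beta (runner ℓ (betaSet q.1.2 N) r),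
        h4 r, h6]
    have h7 : betaSet p.1.2 N = betaSet q.1.2 N := by
      rw [← glue_runner ℓ hℓ (betaSet p.1.2 N), h5, glue_runner ℓ hℓ]
    exact Subtype.ext (beta_inj (hcN p) (hcN q) h7)
  · rintro ⟨⟨⟨c, hc⟩, μ⟩, hx⟩
    simp only at hx
    have hcc := card_parts_le c.2
    have hcN' : Multiset.card c.2.parts ≤ N := by omega
    have hcs := (isCore_iff ℓ hℓ c.2 hcN').1 hc
    set R := fun r => (runner ℓ (betaSet c.2 N) r).card with hR
    have hrun : ∀ r, runner ℓ (betaSet c.2 N) r = Finset.range (R r) := fun r =>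
      coreSet_runner ℓ hcs r
    have hRn : ∀ r, n ≤ R r := by
      intro r
      have hsub : Finset.range n ⊆ runner ℓ (betaSet c.2 N) r := by
        intro q hq
        simp only [Finset.mem_range] at hq
        rw [mem_runner]
        apply beta_low
        have := r.2
        have : ℓ * (q + 1) ≤ ℓ * n := Nat.mul_le_mul_left _ hq
        rw [mul_add] at this
        omega
      simpa using Finset.card_le_card hsub
    have hμ : ∀ r, Multiset.card (μ r).2.parts ≤ R r := by
      intro r
      have h1 := card_parts_le (μ r).2
      have h2 : (μ r).1 ≤ ∑ r, (μ r).1 :=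
        Finset.single_le_sum (f := fun r => (μ r).1) (fun _ _ => Nat.zero_le _) (Finset.mem_univ r)
      have h3 : ∑ r, (μ r).1 ≤ ℓ * ∑ r, (μ r).1 := Nat.le_mul_of_pos_left _ hℓ
      have := hRn r
      omega
    let S : Fin ℓ → Finset ℕ := fun r => betaSet (μ r).2 (R r)
    have hScard : ∀ r, (S r).card = R r := fun r => beta_card _ _
    have hcglue : (glue ℓ fun r => Finset.range (S r).card) = betaSet c.2 N := by
      rw [← glue_runner ℓ hℓ (betaSet c.2 N)]
      congr 1
      funext r
      rw [hrun, hScard]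
    have hgc : (glue ℓ S).card = N := by
      have h1 : (glue ℓ fun r => Finset.range (S r).card).card = N := by rw [hcglue, beta_card]
      rw [glue_card] at h1 ⊢
      simpa using h1
    have hb : betaSet (toP (glue ℓ S)).2 N = glue ℓ S := by
      have := toP_beta (glue ℓ S); rwa [hgc] at this
    refine ⟨⟨toP (glue ℓ S), ?_⟩, ?_⟩
    · rw [size_glue, hcglue, toP_of_beta _ hcN', ← hx]
      congr 2
      refine Finset.sum_congr rfl fun r _ => ?_
      simp only [S]
      rw [toP_of_beta _ (hμ r)]
    · apply Subtype.ext
      simp only [f]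
      rw [hb]
      refine Prod.ext (Subtype.ext ?_) (funext fun r => ?_)
      · simp only [runner_glue]
        rw [hcglue, toP_of_beta _ hcN']
      · simp only [runner_glue]
        exact toP_of_beta _ (hμ r)

/-- The core-quotient bijection, with sizes. -/
theorem core_quot (ℓ : ℕ) (hℓ : 0 < ℓ) :
    ∃ e : PT ≃ CoreT ℓ × (Fin ℓ → PT), ∀ p, p.1 = (e p).1.1.1 + ℓ * ∑ r, ((e p).2 r).1 := by
  let e := Equiv.ofFiberEquiv (f := fun p : PT => p.1)
    (g := fun x : CoreT ℓ × (Fin ℓ → PT) => x.1.1.1 + ℓ * ∑ r, (x.2 r).1)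
    (fun n => (core_quot_fiber ℓ hℓ n).some)
  exact ⟨e, fun p => (Equiv.ofFiberEquiv_map (f := fun p : PT => p.1)
    (g := fun x : CoreT ℓ × (Fin ℓ → PT) => x.1.1.1 + ℓ * ∑ r, (x.2 r).1)
    (fun n => (core_quot_fiber ℓ hℓ n).some) p).symm⟩

end WC

namespace WC

theorem tower_map {ℓ : ℕ} {C A B : Type*} (sA : A → ℕ)
    (eA : A ≃ C × (Fin ℓ → A)) (eB : B ≃ C × (Fin ℓ → B))
    (hlt : ∀ a, sA a ≠ 0 → ∀ r, sA ((eA a).2 r) < sA a) (b0 : B) :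
    ∃ φ : A → B, (∀ a, sA a = 0 → φ a = b0) ∧
      ∀ a, sA a ≠ 0 → φ a = eB.symm ((eA a).1, fun r => φ ((eA a).2 r)) := by
  classical
  let wf : WellFounded (fun x y : A => sA x < sA y) := (measure sA).wf
  let F : ∀ a : A, (∀ b, sA b < sA a → B) → B := fun a ih =>
    if h : sA a = 0 then b0 else eB.symm ((eA a).1, fun r => ih ((eA a).2 r) (hlt a h r))
  refine ⟨wf.fix F, ?_, ?_⟩
  · intro a ha
    rw [wf.fix_eq]; simp [F, ha]
  · intro a ha
    rw [wf.fix_eq]; simp [F, ha]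

theorem tower {ℓ : ℕ} (hℓ : 2 ≤ ℓ) {C A B : Type*} (sc : C → ℕ) (sA : A → ℕ) (sB : B → ℕ)
    (eA : A ≃ C × (Fin ℓ → A)) (eB : B ≃ C × (Fin ℓ → B))
    (hA : ∀ a, sA a = sc (eA a).1 + ℓ * ∑ r, sA ((eA a).2 r))
    (hB : ∀ b, sB b = sc (eB b).1 + ℓ * ∑ r, sB ((eB b).2 r))
    (uA : ∃! a, sA a = 0) (uB : ∃! b, sB b = 0) :
    ∃ e : A ≃ B, ∀ a, sB (e a) = sA a := by
  have hlt : ∀ {A : Type _} (sA : A → ℕ) (eA : A ≃ C × (Fin ℓ → A))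
      (_ : ∀ a, sA a = sc (eA a).1 + ℓ * ∑ r, sA ((eA a).2 r)),
      ∀ a, sA a ≠ 0 → ∀ r, sA ((eA a).2 r) < sA a := by
    intro A sA eA hA a ha r
    have h1 := hA a
    have h2 : sA ((eA a).2 r) ≤ ∑ r, sA ((eA a).2 r) :=
      Finset.single_le_sum (f := fun r => sA ((eA a).2 r)) (fun _ _ => Nat.zero_le _)
        (Finset.mem_univ r)
    have h3 : 2 * ∑ r, sA ((eA a).2 r) ≤ ℓ * ∑ r, sA ((eA a).2 r) := Nat.mul_le_mul_right _ hℓ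
    omega
  have hlt' : ∀ b, sB b ≠ 0 → ∀ r, sB ((eB b).2 r) < sB b := by
    intro a ha r
    have h1 := hB a
    have h2 : sB ((eB a).2 r) ≤ ∑ r, sB ((eB a).2 r) :=
      Finset.single_le_sum (f := fun r => sB ((eB a).2 r)) (fun _ _ => Nat.zero_le _)
        (Finset.mem_univ r)
    have h3 : 2 * ∑ r, sB ((eB a).2 r) ≤ ℓ * ∑ r, sB ((eB a).2 r) := Nat.mul_le_mul_right _ hℓ
    omega
  obtain ⟨a0, ha0, ua⟩ := uA
  obtain ⟨b0, hb0, ub⟩ := uB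
  obtain ⟨φ, φ0, φ1⟩ := tower_map sA eA eB (hlt sA eA hA) b0
  obtain ⟨ψ, ψ0, ψ1⟩ := tower_map sB eB eA hlt' a0
  have hφ : ∀ n, ∀ a, sA a = n → sB (φ a) = sA a := by
    intro n
    induction n using Nat.strong_induction_on with
    | _ n ih =>
      intro a han
      by_cases h : sA a = 0
      · rw [φ0 a h, hb0, h]
      · rw [φ1 a h, hB, hA a, Equiv.apply_symm_apply]
        congr 2
        refine Finset.sum_congr rfl fun r _ => ?_
        exact ih _ (han ▸ hlt sA eA hA a h r) _ rfl
  have hψ : ∀ n, ∀ a, sB a = n → sA (ψ a) = sB a := by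
    intro n
    induction n using Nat.strong_induction_on with
    | _ n ih =>
      intro a han
      by_cases h : sB a = 0
      · rw [ψ0 a h, ha0, h]
      · rw [ψ1 a h, hA, hB a, Equiv.apply_symm_apply]
        congr 2
        refine Finset.sum_congr rfl fun r _ => ?_
        exact ih _ (han ▸ hlt' a h r) _ rfl
  refine ⟨⟨φ, ψ, ?_, ?_⟩, fun a => hφ _ a rfl⟩
  · suffices H : ∀ n, ∀ a, sA a = n → ψ (φ a) = a from fun a => H _ a rfl
    intro n
    induction n using Nat.strong_induction_on with
    | _ n ih =>
      intro a han
      have hs := hφ _ a rfl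
      by_cases h : sA a = 0
      · rw [ψ0 _ (hs.trans h), ua a h]
      · rw [ψ1 _ (by rw [hs]; exact h), φ1 a h, Equiv.apply_symm_apply, Equiv.symm_apply_eq]
        refine Prod.ext rfl (funext fun r => ?_)
        exact ih _ (han ▸ hlt sA eA hA a h r) _ rfl
  · suffices H : ∀ n, ∀ a, sB a = n → φ (ψ a) = a from fun a => H _ a rfl
    intro n
    induction n using Nat.strong_induction_on with
    | _ n ih =>
      intro a han
      have hs := hψ _ a rfl
      by_cases h : sB a = 0
      · rw [φ0 _ (hs.trans h), ub a h]
      · rw [φ1 _ (by rw [hs]; exact h), ψ1 a h, Equiv.apply_symm_apply, Equiv.symm_apply_eq]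
        refine Prod.ext rfl (funext fun r => ?_)
        exact ih _ (han ▸ hlt' a h r) _ rfl

/-- Index set without the `x` coordinate. -/
abbrev JT (ℓ : ℕ) := ℕ × Σ c : List ℕ+, Fin ((ℓ - 1) ^ c.length)

def wtJ {ℓ : ℕ} (j : JT ℓ) : ℕ := j.1 + csum j.2.1

theorem csum_cons (x : ℕ+) (c : List ℕ+) : csum (x :: c) = x + csum c := by simp [csum]

def consJ {k : ℕ} (a : ℕ) (i : Fin k) (c : List ℕ+) (j : Fin (k ^ c.length)) :
    Σ c : List ℕ+, Fin (k ^ c.length) :=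
  ⟨a.succPNat :: c, Fin.cast (by rw [List.length_cons, pow_succ]) (finProdFinEquiv (j, i))⟩

theorem consJ_inj {k : ℕ} {a a' : ℕ} {i i' : Fin k} {c c' : List ℕ+} {j : Fin (k ^ c.length)}
    {j' : Fin (k ^ c'.length)} (h : consJ a i c j = consJ a' i' c' j') :
    a = a' ∧ i = i' ∧ (⟨c, j⟩ : Σ c : List ℕ+, Fin (k ^ c.length)) = ⟨c', j'⟩ := by
  unfold consJ at h
  have h1 := congrArg Sigma.fst h
  simp only [List.cons.injEq] at h1
  obtain ⟨h1, rfl⟩ := h1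
  have h2 : a = a' := Nat.succPNat_injective h1
  subst h2
  have h3 := eq_of_heq (Sigma.mk.inj h).2
  have h4 := finProdFinEquiv.injective (Fin.cast_injective _ h3)
  simp only [Prod.mk.injEq] at h4
  obtain ⟨rfl, rfl⟩ := h4
  exact ⟨rfl, rfl, rfl⟩

theorem consJ_surj {k : ℕ} (x : ℕ+) (c : List ℕ+) (j : Fin (k ^ (x :: c).length)) :
    ∃ a i j', consJ a i c j' = ⟨x :: c, j⟩ ∧ a + 1 = x := by
  obtain ⟨⟨j', i⟩, hj⟩ := (finProdFinEquiv (m := k ^ c.length) (n := k)).surjective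
    (Fin.cast (by rw [List.length_cons, pow_succ]) j)
  have hx : (x.natPred).succPNat = x := PNat.succPNat_natPred x
  refine ⟨x.natPred, i, j', ?_, PNat.natPred_add_one x⟩
  unfold consJ
  rw [hj, hx]
  rfl

theorem indexEquiv (k : ℕ) : ∃ e : Option (Fin (k + 1) × JT (k + 1)) ≃ JT (k + 1),
    wtJ (e none) = 0 ∧ ∀ r j, wtJ (e (some (r, j))) = wtJ j + 1 := by
  let f : Option (Fin (k + 1) × JT (k + 1)) → JT (k + 1) := fun o =>
    match o with
    | none => (0, ⟨[], ⟨0, by simp⟩⟩)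
    | some (r, (a, ⟨c, j⟩)) =>
      Fin.cases (motive := fun _ => JT (k + 1)) (a + 1, ⟨c, j⟩) (fun i => (0, consJ a i c j)) r
  have hbij : Function.Bijective f := by
    constructor
    · rintro (_ | ⟨r, a, c, j⟩) (_ | ⟨r', a', c', j'⟩) h
      · rfl
      · exfalso
        cases r' using Fin.cases with
        | zero => have h1 := congrArg Prod.fst h; simp [f] at h1
        | succ i => have h1 := congrArg (fun x => x.2.1) h; simp [f, consJ] at h1
      · exfalso
        cases r using Fin.cases with
        | zero => have h1 := congrArg Prod.fst h; simp [f] at h1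
        | succ i => have h1 := congrArg (fun x => x.2.1) h; simp [f, consJ] at h1
      · cases r using Fin.cases with
        | zero =>
          cases r' using Fin.cases with
          | zero =>
            simp only [f, Fin.cases_zero, Prod.mk.injEq, add_left_inj] at h
            rw [h.1, h.2]
          | succ i => simp [f] at h
        | succ i =>
          cases r' using Fin.cases with
          | zero => simp [f] at h
          | succ i' =>
            simp only [f, Fin.cases_succ, Prod.mk.injEq, true_and] at h
            obtain ⟨h1, h2, h3⟩ := consJ_inj h
            rw [h1, h2, h3]
    · rintro ⟨a, c, j⟩
      cases a with
      | succ a => exact ⟨some (0, (a, ⟨c, j⟩)), rfl⟩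
      | zero =>
        cases c with
        | nil =>
          refine ⟨none, ?_⟩
          have : Subsingleton (Fin ((k + 1 - 1) ^ ([] : List ℕ+).length)) := by
            simp only [List.length_nil, pow_zero]; infer_instance
          simp only [f]
          congr 2
          exact Subsingleton.elim _ _
        | cons x c =>
          obtain ⟨a, i, j', h, _⟩ := consJ_surj x c j
          exact ⟨some (i.succ, (a, ⟨c, j'⟩)), by simp only [f, Fin.cases_succ]; rw [← h]⟩
  refine ⟨Equiv.ofBijective f hbij, ?_, ?_⟩
  · simp [f, wtJ, csum]
  · rintro r ⟨a, c, j⟩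
    cases r using Fin.cases with
    | zero => simp [f, wtJ]; ring
    | succ i => simp [f, wtJ, consJ, csum_cons]; ring

end WC

namespace WC

/-- Finitely supported families of cores. -/
abbrev Fam (ℓ : ℕ) := {w : JT ℓ → PT // (∀ j, IsCore ℓ (w j).2) ∧ {j | (w j).1 ≠ 0}.Finite}

noncomputable def sizeF {ℓ : ℕ} (w : Fam ℓ) : ℕ := ∑ᶠ j : JT ℓ, ℓ ^ wtJ j * (w.1 j).1

theorem PT_unique_zero : ∃! p : PT, p.1 = 0 := by
  refine ⟨⟨0, default⟩, rfl, ?_⟩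
  rintro ⟨m, p⟩ h
  simp only at h
  subst h
  congr 1
  exact Subsingleton.elim _ _

theorem exists_core_zero (ℓ : ℕ) (hℓ : 0 < ℓ) : ∃ c : CoreT ℓ, c.1.1 = 0 := by
  obtain ⟨e, he⟩ := core_quot ℓ hℓ
  have := he ⟨0, default⟩
  exact ⟨(e ⟨0, default⟩).1, by simp only at this; omega⟩

theorem supp_finite {ℓ : ℕ} (w : Fam ℓ) :
    (Function.support fun j : JT ℓ => ℓ ^ wtJ j * (w.1 j).1).Finite := by
  refine w.2.2.subset ?_
  intro j hj
  simp only [Function.mem_support, ne_eq, mul_eq_zero, not_or] at hj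
  exact hj.2

theorem fam_unique_zero (ℓ : ℕ) (hℓ : 0 < ℓ) : ∃! w : Fam ℓ, sizeF w = 0 := by
  obtain ⟨c, hc⟩ := exists_core_zero ℓ hℓ
  refine ⟨⟨fun _ => c.1, fun _ => c.2, by simp [hc]⟩, by simp [sizeF, hc], ?_⟩
  intro w hw
  apply Subtype.ext
  funext j
  apply PT_unique_zero.unique _ hc
  have h1 := single_le_finsum j (supp_finite w) (fun j => Nat.zero_le _)
  unfold sizeF at hw
  rw [hw] at h1
  have h2 : ℓ ^ wtJ j * (w.1 j).1 = 0 := Nat.le_zero.1 h1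
  rcases Nat.mul_eq_zero.1 h2 with h | h
  · exact absurd h (pow_pos hℓ _).ne'
  · exact h

theorem fam_equiv (ℓ : ℕ) (hℓ : 0 < ℓ) :
    ∃ e : Fam ℓ ≃ CoreT ℓ × (Fin ℓ → Fam ℓ),
      ∀ w, sizeF w = (e w).1.1.1 + ℓ * ∑ r, sizeF ((e w).2 r) := by
  obtain ⟨k, rfl⟩ : ∃ k, ℓ = k + 1 := ⟨ℓ - 1, by omega⟩
  obtain ⟨eJ, h0, h1⟩ := indexEquiv k
  let fwd : Fam (k + 1) → CoreT (k + 1) × (Fin (k + 1) → Fam (k + 1)) := fun w =>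
    (⟨w.1 (eJ none), w.2.1 _⟩, fun r => ⟨fun j => w.1 (eJ (some (r, j))), fun j => w.2.1 _, by
      refine Set.Finite.preimage (f := fun j => eJ (some (r, j))) ?_ w.2.2
      intro a _ b _ hab
      simpa using hab⟩)
  let v : CoreT (k + 1) × (Fin (k + 1) → Fam (k + 1)) → Option (Fin (k + 1) × JT (k + 1)) → PT :=
    fun x o => match o with
      | none => x.1.1
      | some (r, i) => (x.2 r).1 i
  have hv : ∀ x o, IsCore (k + 1) (v x o).2 := by
    rintro x (_ | ⟨r, i⟩)
    · exact x.1.2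
    · exact (x.2 r).2.1 i
  let bwd : CoreT (k + 1) × (Fin (k + 1) → Fam (k + 1)) → Fam (k + 1) := fun x =>
    ⟨fun j => v x (eJ.symm j), fun j => hv x _, by
      have hfin : (insert none (⋃ r : Fin (k + 1), (fun j => some (r, j)) ''
          {j | ((x.2 r).1 j).1 ≠ 0})).Finite := by
        apply Set.Finite.insert
        apply Set.finite_iUnion
        intro r
        exact (x.2 r).2.2.image _
      refine (hfin.image eJ).subset ?_
      intro j hj
      refine ⟨eJ.symm j, ?_, by simp⟩
      change (v x (eJ.symm j)).1 ≠ 0 at hj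
      generalize eJ.symm j = o at hj ⊢
      rcases o with _ | ⟨r, i⟩
      · simp
      · right
        simp only [Set.mem_iUnion]
        exact ⟨r, i, hj, rfl⟩⟩
  refine ⟨⟨fwd, bwd, ?_, ?_⟩, ?_⟩
  · intro w
    apply Subtype.ext
    funext j
    simp only [fwd, bwd, v]
    rcases h : eJ.symm j with _ | ⟨r, i⟩
    · simp only; rw [← h]; simp
    · simp only; rw [← h]; simp
  · rintro ⟨c, f⟩
    simp only [fwd, bwd, v]
    refine Prod.ext (Subtype.ext ?_) (funext fun r => Subtype.ext (funext fun j => ?_))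
    · simp
    · simp
  · intro w
    simp only [Equiv.coe_fn_mk, fwd]
    unfold sizeF
    have hs := supp_finite w
    have hs' : (Function.support fun o => (k + 1) ^ wtJ (eJ o) * (w.1 (eJ o)).1).Finite :=
      hs.preimage (f := eJ) eJ.injective.injOn
    have hs2 : (Function.support fun x : Fin (k + 1) × JT (k + 1) =>
        (k + 1) ^ wtJ (eJ (some x)) * (w.1 (eJ (some x))).1).Finite :=
      hs'.preimage (f := some) (Option.some_injective _).injOn
    rw [← finsum_comp_equiv eJ, finsum_option
      (f := fun o => (k + 1) ^ wtJ (eJ o) * (w.1 (eJ o)).1) hs2, h0, pow_zero, one_mul, finsum_curry _ hs2,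
      finsum_eq_sum_of_fintype, Finset.mul_sum]
    congr 1
    refine Finset.sum_congr rfl fun r _ => ?_
    rw [mul_finsum]
    refine finsum_congr fun j => ?_
    rw [h1, pow_succ]
    ring

theorem fam_part (ℓ : ℕ) (hℓ : 2 ≤ ℓ) : ∃ e : Fam ℓ ≃ PT, ∀ w, (e w).1 = sizeF w := by
  obtain ⟨e1, h1⟩ := fam_equiv ℓ (by omega)
  obtain ⟨e2, h2⟩ := core_quot ℓ (by omega)
  exact tower hℓ (fun c : CoreT ℓ => c.1.1) sizeF (fun p : PT => p.1) e1 e2 h1 h2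
    (fam_unique_zero ℓ (by omega)) PT_unique_zero

/-- Partitions as multisets. -/
abbrev MP := Multiset ℕ+
def szM (m : MP) : ℕ := (m.map fun x : ℕ+ => (x : ℕ)).sum

theorem PT_MP : ∃ e : PT ≃ MP, ∀ p, szM (e p) = p.1 := by
  let f : PT → MP := fun p => p.2.parts.attach.map fun x => x.1.toPNat (p.2.parts_pos x.2)
  have hf : ∀ p, (f p).map (fun x : ℕ+ => (x : ℕ)) = p.2.parts := by
    intro p
    simp only [f]
    rw [Multiset.map_map]
    exact Multiset.attach_map_val _
  have hb : Function.Bijective f := by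
    constructor
    · intro p q h
      apply PT_ext
      rw [← hf p, ← hf q, h]
    · intro m
      refine ⟨⟨_, ⟨m.map (fun x : ℕ+ => (x : ℕ)), ?_, rfl⟩⟩, ?_⟩
      · intro i hi
        rw [Multiset.mem_map] at hi
        obtain ⟨a, _, rfl⟩ := hi
        exact a.2
      · apply Multiset.map_injective PNat.coe_injective
        rw [hf]
  refine ⟨Equiv.ofBijective f hb, ?_⟩
  intro p
  simp only [Equiv.ofBijective_apply, szM, hf, p.2.parts_sum]

theorem fam_MP (ℓ : ℕ) (hℓ : 2 ≤ ℓ) : ∃ e : Fam ℓ ≃ MP, ∀ w, szM (e w) = sizeF w := by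
  obtain ⟨e1, h1⟩ := fam_part ℓ hℓ
  obtain ⟨e2, h2⟩ := PT_MP
  exact ⟨e1.trans e2, fun w => by simp [h1, h2]⟩

/-- Index type of the statement. -/
abbrev IT (ℓ : ℕ) := ℕ × Fin 2 × Σ c : List ℕ+, Fin ((ℓ - 1) ^ c.length)

abbrev XT (ℓ n : ℕ) : Set (IT ℓ → PT) := { w | (∀ i, IsCore ℓ (w i).2) ∧
      { i | (w i).1 ≠ 0 }.Finite ∧
      ∑ᶠ i : ℕ × Fin 2 × Σ c : List ℕ+, Fin ((ℓ - 1) ^ c.length),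
        ℓ ^ (i.1 + csum i.2.2.1) * (w i).1 = n }

def swapI (ℓ : ℕ) : IT ℓ ≃ Fin 2 × JT ℓ where
  toFun i := (i.2.1, (i.1, i.2.2))
  invFun i := (i.2.1, i.1, i.2.2)
  left_inv _ := rfl
  right_inv _ := rfl

theorem X_equiv (ℓ : ℕ) (hℓ : 2 ≤ ℓ) (n : ℕ) :
    ∃ e : XT ℓ n ≃ {x : MP × MP // szM x.1 + szM x.2 = n},
      ∀ w, (w.1 ∘ flipIdx ℓ = w.1 ↔ (e w).1.1 = (e w).1.2) := by
  obtain ⟨e, he⟩ := fam_MP ℓ hℓ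
  let g : XT ℓ n → Fin 2 → Fam ℓ := fun w x =>
    ⟨fun j => w.1 (j.1, x, j.2), fun j => w.2.1 _, by
      refine Set.Finite.preimage (f := fun j : JT ℓ => (j.1, x, j.2)) ?_ w.2.2.1
      rintro ⟨a, b⟩ _ ⟨a', b'⟩ _ hab
      simpa using hab⟩
  have hsum : ∀ w : IT ℓ → PT, { i | (w i).1 ≠ 0 }.Finite →
      ∑ᶠ i : IT ℓ, ℓ ^ (i.1 + csum i.2.2.1) * (w i).1 =
      ∑ x : Fin 2, ∑ᶠ j : JT ℓ, ℓ ^ wtJ j * (w (j.1, x, j.2)).1 := by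
    intro w hw
    have hs : (Function.support fun i : IT ℓ => ℓ ^ (i.1 + csum i.2.2.1) * (w i).1).Finite := by
      refine hw.subset ?_
      intro j hj
      simp only [Function.mem_support, ne_eq, mul_eq_zero, not_or] at hj
      exact hj.2
    rw [← finsum_comp_equiv (swapI ℓ).symm, finsum_curry _
      (hs.preimage (f := (swapI ℓ).symm) (swapI ℓ).symm.injective.injOn),
      finsum_eq_sum_of_fintype]
    rfl
  have hg : ∀ w, szM (e (g w 0)) + szM (e (g w 1)) = n := by
    intro w
    rw [he, he, ← w.2.2.2, hsum _ w.2.2.1, Fin.sum_univ_two]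
    rfl
  have hb : Function.Bijective (fun w : XT ℓ n =>
      (⟨(e (g w 0), e (g w 1)), hg w⟩ : {x : MP × MP // szM x.1 + szM x.2 = n})) := by
    constructor
    · intro w w' h
      have h1 := congrArg Subtype.val h
      simp only [Prod.mk.injEq, EmbeddingLike.apply_eq_iff_eq] at h1
      apply Subtype.ext
      funext ⟨a, x, j⟩
      fin_cases x
      · exact congrFun (congrArg Subtype.val h1.1) (a, j)
      · exact congrFun (congrArg Subtype.val h1.2) (a, j)
    · rintro ⟨⟨m1, m2⟩, hm⟩
      simp only at hm
      let w : IT ℓ → PT := fun i => (![e.symm m1, e.symm m2] i.2.1).1 (i.1, i.2.2)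
      have hfin : { i | (w i).1 ≠ 0 }.Finite := by
        have : (⋃ x : Fin 2, (fun j : JT ℓ => ((j.1, x, j.2) : IT ℓ)) ''
            {j | ((![e.symm m1, e.symm m2] x).1 j).1 ≠ 0}).Finite :=
          Set.finite_iUnion fun x => (![e.symm m1, e.symm m2] x).2.2.image _
        refine this.subset ?_
        rintro ⟨a, x, j⟩ h
        simp only [Set.mem_iUnion]
        exact ⟨x, (a, j), h, rfl⟩
      refine ⟨⟨w, fun i => (![e.symm m1, e.symm m2] i.2.1).2.1 _, hfin, ?_⟩, ?_⟩
      · rw [hsum w hfin, Fin.sum_univ_two]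
        have h1 := he (e.symm m1)
        have h2 := he (e.symm m2)
        rw [Equiv.apply_symm_apply] at h1 h2
        rw [← hm, h1, h2]
        rfl
      · apply Subtype.ext
        simp only [Prod.mk.injEq]
        constructor
        · rw [← Equiv.eq_symm_apply]
          rfl
        · rw [← Equiv.eq_symm_apply]
          rfl
  refine ⟨Equiv.ofBijective _ hb, ?_⟩
  intro w
  simp only [Equiv.ofBijective_apply, EmbeddingLike.apply_eq_iff_eq]
  constructor
  · intro h
    apply Subtype.ext
    funext j
    exact congrFun h (j.1, 1, j.2)
  · intro h
    have h' : ∀ a j, w.1 (a, 0, j) = w.1 (a, 1, j) := fun a j =>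
      congrFun (congrArg Subtype.val h) (a, j)
    funext ⟨a, x, j⟩
    fin_cases x
    · exact (h' a j).symm
    · exact h' a j

end WC

namespace WC

/-- Signed labels. -/
abbrev LT := Multiset (ℕ+ × ℤˣ)
def szL (M : LT) : ℕ := (M.map fun x : ℕ+ × ℤˣ => (x.1 : ℕ)).sum
def sgL (M : LT) : ℤˣ := (M.map fun x : ℕ+ × ℤˣ => x.2).prod
def SplitL (M : LT) : Prop := ∀ x ∈ M, x.2 = 1 ∧ Even (x.1 : ℕ)

def joinL (x : MP × MP) : LT := x.1.map (fun m => (m, 1)) + x.2.map (fun m => (m, -1))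

theorem joinL_bij : Function.Bijective joinL := by
  have h1 : ∀ x, ((joinL x).filter fun y => y.2 = 1).map Prod.fst = x.1 := by
    intro x
    simp [joinL, Multiset.filter_add, Multiset.filter_map, Multiset.map_map, Function.comp_def]
  have h2 : ∀ x, ((joinL x).filter fun y => ¬ y.2 = 1).map Prod.fst = x.2 := by
    intro x
    simp [joinL, Multiset.filter_add, Multiset.filter_map, Multiset.map_map, Function.comp_def]
  constructor
  · intro x y h
    refine Prod.ext ?_ ?_
    · rw [← h1 x, h, h1]
    · rw [← h2 x, h, h2]
  · intro M
    refine ⟨((M.filter fun y => y.2 = 1).map Prod.fst, (M.filter fun y => ¬ y.2 = 1).map Prod.fst), ?_⟩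
    unfold joinL
    conv_rhs => rw [← Multiset.filter_add_not (fun y : ℕ+ × ℤˣ => y.2 = 1) M]
    congr 1
    · rw [Multiset.map_map]
      conv_rhs => rw [← Multiset.map_id (M.filter fun y => y.2 = 1)]
      refine Multiset.map_congr rfl fun y hy => ?_
      rw [Multiset.mem_filter] at hy
      exact Prod.ext rfl hy.2.symm
    · rw [Multiset.map_map]
      conv_rhs => rw [← Multiset.map_id (M.filter fun y => ¬ y.2 = 1)]
      refine Multiset.map_congr rfl fun y hy => ?_
      rw [Multiset.mem_filter] at hy
      exact Prod.ext rfl ((Int.units_eq_one_or y.2).resolve_left hy.2).symm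

theorem szL_join (x : MP × MP) : szL (joinL x) = szM x.1 + szM x.2 := by
  simp [szL, joinL, szM, Multiset.map_map, Function.comp_def]

theorem sgL_join (x : MP × MP) : sgL (joinL x) = (-1) ^ Multiset.card x.2 := by
  simp [sgL, joinL, Multiset.map_map, Function.comp_def]

theorem splitL_join (x : MP × MP) :
    SplitL (joinL x) ↔ x.2 = 0 ∧ ∀ m ∈ x.1, Even (m : ℕ) := by
  unfold SplitL joinL
  constructor
  · intro h
    constructor
    · rw [Multiset.eq_zero_iff_forall_notMem]
      intro m hm
      have := (h (m, -1) (by simp [hm])).1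
      simp at this
    · intro m hm
      exact (h (m, 1) (by simp [hm])).2
  · rintro ⟨h1, h2⟩ y hy
    rw [h1] at hy
    simp only [Multiset.map_zero, add_zero, Multiset.mem_map] at hy
    obtain ⟨m, hm, rfl⟩ := hy
    exact ⟨rfl, h2 m hm⟩

theorem szM_cons (m : ℕ+) (a : MP) : szM (m ::ₘ a) = m + szM a := by simp [szM]
theorem szM_erase {m : ℕ+} {a : MP} (h : m ∈ a) : m + szM (a.erase m) = szM a := by
  rw [← szM_cons, Multiset.cons_erase h]

def Active (x : MP × MP) (m : ℕ+) : Prop := Odd (x.2.count m) ∨ m ∈ x.1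

open Classical in
noncomputable def toggleAt (m : ℕ+) (x : MP × MP) : MP × MP :=
  if Odd (x.2.count m) then (m ::ₘ x.1, x.2.erase m) else (x.1.erase m, m ::ₘ x.2)

theorem mem_of_odd {m : ℕ+} {b : MP} (h : Odd (b.count m)) : m ∈ b := by
  rw [← Multiset.count_pos]; exact h.pos

theorem toggleAt_active {m : ℕ+} {x : MP × MP} (h : Active x m) (m' : ℕ+) :
    Active (toggleAt m x) m' ↔ Active x m' := by
  classical
  unfold toggleAt
  by_cases ho : Odd (x.2.count m)
  · rw [if_pos ho]
    unfold Active
    by_cases hm : m' = m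
    · subst hm; simp [ho]
    · simp [hm, Multiset.count_erase_of_ne hm]
  · rw [if_neg ho]
    have hx := h.resolve_left ho
    unfold Active
    by_cases hm : m' = m
    · subst hm
      simp only [Multiset.count_cons_self, hx, or_true, iff_true]
      left
      rw [Nat.odd_add_one]; exact ho
    · simp [Multiset.count_cons_of_ne hm, Multiset.mem_erase_of_ne hm]

theorem toggleAt_invol {m : ℕ+} {x : MP × MP} (h : Active x m) :
    toggleAt m (toggleAt m x) = x := by
  classical
  unfold toggleAt
  by_cases ho : Odd (x.2.count m)
  · rw [if_pos ho]
    have hm := mem_of_odd ho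
    have : ¬ Odd ((x.2.erase m).count m) := by
      rw [Multiset.count_erase_self]
      rw [Nat.not_odd_iff_even]
      exact Nat.Odd.sub_odd ho odd_one
    simp only
    rw [if_neg this]
    simp [Multiset.cons_erase hm]
  · rw [if_neg ho]
    have hx := h.resolve_left ho
    have : Odd ((m ::ₘ x.2).count m) := by
      rw [Multiset.count_cons_self, Nat.odd_add_one]; exact ho
    simp only
    rw [if_pos this]
    simp [Multiset.cons_erase hx]

theorem toggleAt_size {m : ℕ+} {x : MP × MP} (h : Active x m) :
    szM (toggleAt m x).1 + szM (toggleAt m x).2 = szM x.1 + szM x.2 := by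
  classical
  unfold toggleAt
  by_cases ho : Odd (x.2.count m)
  · rw [if_pos ho]
    have := szM_erase (mem_of_odd ho)
    simp only [szM_cons]; omega
  · rw [if_neg ho]
    have := szM_erase (h.resolve_left ho)
    simp only [szM_cons]; omega

theorem toggleAt_parity {m : ℕ+} {x : MP × MP} :
    Even (Multiset.card (toggleAt m x).2) ↔ ¬ Even (Multiset.card x.2) := by
  classical
  unfold toggleAt
  by_cases ho : Odd (x.2.count m)
  · rw [if_pos ho]
    have hm := mem_of_odd ho
    have := Multiset.card_erase_add_one hm
    rw [← this, Nat.even_add_one]; simp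
  · rw [if_neg ho]
    simp [Nat.even_add_one]

open Classical in
noncomputable def toggle (x : MP × MP) : MP × MP :=
  if h : ∃ m, Active x m then toggleAt (PNat.find h) x else x

theorem toggle_spec {x : MP × MP} (h : ∃ m, Active x m) : ∃ m, Active x m ∧
    toggle x = toggleAt m x ∧ toggle (toggle x) = x := by
  classical
  have hm := PNat.find_spec h
  have h2 : toggle x = toggleAt (PNat.find h) x := by rw [toggle, dif_pos h]
  refine ⟨PNat.find h, hm, h2, ?_⟩
  have ha := toggleAt_active hm
  have h' : ∃ m, Active (toggleAt (PNat.find h) x) m := ⟨_, (ha _).2 hm⟩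
  have hf : PNat.find h' = PNat.find h := by
    apply le_antisymm
    · exact PNat.find_min' _ ((ha _).2 hm)
    · exact PNat.find_min' _ ((ha _).1 (PNat.find_spec h'))
  rw [h2, toggle, dif_pos h', hf]
  exact toggleAt_invol hm

theorem exists_half {b : MP} (h : ∀ m, ¬ Odd (b.count m)) : ∃ c : MP, b = 2 • c := by
  classical
  refine ⟨Multiset.toFinsupp.symm ((Multiset.toFinsupp b).mapRange (· / 2) rfl), ?_⟩
  ext m
  rw [Multiset.count_nsmul]
  have h1 := h m
  rw [Nat.not_odd_iff_even] at h1
  simp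
  exact (Nat.mul_div_cancel' h1.two_dvd).symm

theorem finite_MP (n : ℕ) : {m : MP | szM m ≤ n}.Finite := by
  obtain ⟨e, he⟩ := PT_MP
  have : {m : MP | szM m ≤ n} ⊆ ⋃ k ∈ Finset.range (n + 1), e '' (Set.range (Sigma.mk k)) := by
    intro m hm
    simp only [Set.mem_iUnion, Finset.mem_range]
    refine ⟨szM m, Nat.lt_succ_of_le hm, e.symm m, ?_, by simp⟩
    have := he (e.symm m)
    rw [Equiv.apply_symm_apply] at this
    rw [this]
    exact ⟨_, rfl⟩
  refine Set.Finite.subset ?_ this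
  apply Set.Finite.biUnion (Finset.finite_toSet _)
  intro k _
  exact (Set.finite_range _).image _

def QS (n : ℕ) : Set (MP × MP) := {x | szM x.1 + szM x.2 = n}

theorem finite_QS (n : ℕ) : (QS n).Finite := by
  refine ((finite_MP n).prod (finite_MP n)).subset ?_
  rintro ⟨a, b⟩ h
  simp only [QS] at h
  constructor
  · change szM a ≤ n; change szM a + szM b = n at h; omega
  · change szM b ≤ n; change szM a + szM b = n at h; omega

def HS (n : ℕ) : Set MP := {m | 2 * szM m = n}

theorem szM_two (c : MP) : szM (2 • c) = 2 * szM c := by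
  rw [szM, Multiset.map_nsmul, Multiset.sum_nsmul, smul_eq_mul, szM]

theorem parity_count (n : ℕ) : {x ∈ QS n | Even (Multiset.card x.2)}.ncard =
    {x ∈ QS n | ¬ Even (Multiset.card x.2)}.ncard + (HS n).ncard := by
  classical
  have hQ := finite_QS n
  have hsplit : {x ∈ QS n | Even (Multiset.card x.2)} =
      {x ∈ QS n | Even (Multiset.card x.2) ∧ ∃ m, Active x m} ∪
        (fun c : MP => ((0 : MP), 2 • c)) '' HS n := by
    ext ⟨a, b⟩
    constructor
    · rintro ⟨h1, h2⟩
      by_cases h : ∃ m, Active (a, b) m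
      · left; exact ⟨h1, h2, h⟩
      · right
        push Not at h
        have ha : a = 0 := by
          rw [Multiset.eq_zero_iff_forall_notMem]
          intro m hm
          exact h m (Or.inr hm)
        obtain ⟨c, hc⟩ := exists_half (b := b) (fun m hm => h m (Or.inl hm))
        refine ⟨c, ?_, by rw [ha, hc]⟩
        change 2 * szM c = n
        have h1' : szM a + szM b = n := h1
        rw [ha, hc, szM_two] at h1'
        simpa [szM] using h1'
    · rintro (⟨h1, h2, _⟩ | ⟨c, hc, h⟩)
      · exact ⟨h1, h2⟩
      · simp only [Prod.mk.injEq] at h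
        obtain ⟨rfl, rfl⟩ := h
        have hc' : 2 * szM c = n := hc
        constructor
        · change szM 0 + szM (2 • c) = n
          rw [szM_two, hc']; simp [szM]
        · simp
  have hdisj : Disjoint {x ∈ QS n | Even (Multiset.card x.2) ∧ ∃ m, Active x m}
        ((fun c : MP => ((0 : MP), 2 • c)) '' HS n) := by
    rw [Set.disjoint_left]
    rintro x ⟨_, _, m, hm⟩ ⟨c, _, rfl⟩
    rcases hm with hm | hm
    · simp [Multiset.count_nsmul] at hm
      exact absurd hm (by simp)
    · simp at hm
  rw [hsplit, Set.ncard_union_eq hdisj (hQ.subset (fun x hx => hx.1))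
    (hQ.subset (fun x hx => by
      have : x ∈ {x ∈ QS n | Even (Multiset.card x.2)} := by rw [hsplit]; exact Or.inr hx
      exact this.1)),
    Set.ncard_image_of_injective]
  · congr 1
    have hodd : ∀ x : MP × MP, ¬ Even (Multiset.card x.2) → ∃ m, Active x m := by
      intro x hx
      by_contra hcon
      push Not at hcon
      obtain ⟨c, hc⟩ := exists_half (b := x.2) (fun m hm => hcon m (Or.inl hm))
      apply hx
      rw [hc]; simp
    refine Set.ncard_congr (fun x _ => toggle x) ?_ ?_ ?_
    · rintro x ⟨h1, h2, h3⟩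
      obtain ⟨m, hm, ht, -⟩ := toggle_spec h3
      refine ⟨?_, ?_⟩
      · change szM _ + szM _ = n
        rw [ht, toggleAt_size hm]; exact h1
      · rw [ht, toggleAt_parity]; simpa using h2
    · rintro x y ⟨_, _, hx⟩ ⟨_, _, hy⟩ h
      obtain ⟨_, _, _, h1⟩ := toggle_spec hx
      obtain ⟨_, _, _, h2⟩ := toggle_spec hy
      rw [← h1, h, h2]
    · rintro x ⟨h1, h2⟩
      obtain ⟨m, hm, ht, hi⟩ := toggle_spec (hodd x h2)
      refine ⟨toggle x, ⟨?_, ?_, ?_⟩, hi⟩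
      · change szM _ + szM _ = n
        rw [ht, toggleAt_size hm]; exact h1
      · rw [ht, toggleAt_parity]; exact h2
      · rw [ht]; exact ⟨m, (toggleAt_active hm m).2 hm⟩
  · intro c c' h
    simp only [Prod.mk.injEq, true_and] at h
    ext m
    have := congrArg (Multiset.count m) h
    simpa [Multiset.count_nsmul] using this

/-- Label sets. -/
def LS (n : ℕ) : Set LT := {M | szL M = n}

theorem LS_image (n : ℕ) (P : LT → Prop) : {M ∈ LS n | P M}.ncard =
    {x ∈ QS n | P (joinL x)}.ncard := by
  rw [← Set.ncard_image_of_injective _ joinL_bij.injective]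
  congr 1
  ext M
  obtain ⟨x, rfl⟩ := joinL_bij.surjective M
  constructor
  · rintro ⟨h1, h2⟩
    refine ⟨x, ⟨?_, h2⟩, rfl⟩
    change szM _ + szM _ = n
    rw [← szL_join]; exact h1
  · rintro ⟨y, ⟨h1, h2⟩, h3⟩
    have := joinL_bij.injective h3
    subst this
    refine ⟨?_, h2⟩
    change szL _ = n
    rw [szL_join]; exact h1

theorem finite_LS (n : ℕ) : (LS n).Finite := by
  refine ((finite_QS n).image joinL).subset ?_
  intro M hM
  obtain ⟨x, rfl⟩ := joinL_bij.surjective M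
  refine ⟨x, ?_, rfl⟩
  change szM _ + szM _ = n
  rw [← szL_join]; exact hM

theorem exists_double {a : MP} (h : ∀ m ∈ a, Even (m : ℕ)) : ∃ c : MP, a = c.map (2 * ·) := by
  induction a using Multiset.induction_on with
  | empty => exact ⟨0, rfl⟩
  | cons m a ih =>
    obtain ⟨c, hc⟩ := ih (fun x hx => h x (Multiset.mem_cons_of_mem hx))
    obtain ⟨k, hk⟩ := h m (Multiset.mem_cons_self _ _)
    have hk0 : 0 < k := by have := m.pos; omega
    refine ⟨k.toPNat hk0 ::ₘ c, ?_⟩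
    rw [Multiset.map_cons, ← hc]
    congr 1
    apply PNat.coe_injective
    rw [PNat.mul_coe]
    change (m : ℕ) = 2 * k
    omega

theorem szM_double (c : MP) : szM (c.map (2 * ·)) = 2 * szM c := by
  simp [szM, Multiset.map_map, Function.comp_def, Multiset.sum_map_mul_left]

theorem split_count (n : ℕ) : {M ∈ LS n | SplitL M}.ncard = (HS n).ncard := by
  rw [LS_image]
  have : {x ∈ QS n | SplitL (joinL x)} = (fun c : MP => (c.map (2 * ·), (0 : MP))) '' HS n := by
    ext ⟨a, b⟩
    constructor
    · rintro ⟨h1, h2⟩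
      rw [splitL_join] at h2
      obtain ⟨hb, ha⟩ := h2
      simp only at hb ha
      obtain ⟨c, rfl⟩ := exists_double ha
      subst hb
      refine ⟨c, ?_, rfl⟩
      have h1' : szM (c.map (2 * ·)) + szM 0 = n := h1
      rw [szM_double] at h1'
      simpa [szM, HS] using h1'
    · rintro ⟨c, hc, h⟩
      simp only [Prod.mk.injEq] at h
      obtain ⟨rfl, rfl⟩ := h
      have hc' : 2 * szM c = n := hc
      constructor
      · change szM (c.map (2 * ·)) + szM 0 = n
        rw [szM_double, hc']; simp [szM]
      · rw [splitL_join]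
        refine ⟨rfl, ?_⟩
        intro m hm
        simp only [Multiset.mem_map] at hm
        obtain ⟨k, _, rfl⟩ := hm
        simp
  rw [this, Set.ncard_image_of_injective]
  intro c c' h
  simp only [Prod.mk.injEq, and_true] at h
  exact Multiset.map_injective (mul_right_injective 2) h

/-- The combinatorial half of the theorem. -/
theorem comb_half (ℓ : ℕ) (hℓ : 2 ≤ ℓ) (n : ℕ) :
    2 * ({ w ∈ XT ℓ n | w ∘ flipIdx ℓ = w }).ncard +
      ((XT ℓ n).ncard - ({ w ∈ XT ℓ n | w ∘ flipIdx ℓ = w }).ncard) / 2 =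
    {M ∈ LS n | sgL M = 1}.ncard + {M ∈ LS n | SplitL M}.ncard := by
  obtain ⟨e, he⟩ := X_equiv ℓ hℓ n
  have hX : (XT ℓ n).ncard = (QS n).ncard := by
    rw [← Nat.card_coe_set_eq, ← Nat.card_coe_set_eq]
    exact Nat.card_congr e
  have hF : ({ w ∈ XT ℓ n | w ∘ flipIdx ℓ = w }).ncard = (HS n).ncard := by
    have h1 : ({ w ∈ XT ℓ n | w ∘ flipIdx ℓ = w }).ncard =
        ((fun c : MP => (c, c)) '' HS n).ncard := by
      refine Set.ncard_congr (fun w hw => (e ⟨w, hw.1⟩).1) ?_ ?_ ?_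
      · intro w hw
        have h := (he ⟨w, hw.1⟩).1 hw.2
        have h2 := (e ⟨w, hw.1⟩).2
        refine ⟨(e ⟨w, hw.1⟩).1.1, ?_, Prod.ext rfl h⟩
        rw [← h] at h2
        change 2 * _ = n
        omega
      · intro w w' hw hw' h
        have := e.injective (Subtype.ext h)
        exact congrArg Subtype.val this
      · rintro x ⟨c, hc, rfl⟩
        have hc' : 2 * szM c = n := hc
        obtain ⟨w, hw⟩ := e.surjective ⟨(c, c), by simp only; omega⟩
        refine ⟨w.1, ⟨w.2, ?_⟩, ?_⟩
        · rw [he, hw]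
        · simp [hw]
    rw [h1, Set.ncard_image_of_injective]
    intro c c' h
    exact (Prod.mk.inj h).1
  have hE : {M ∈ LS n | sgL M = 1}.ncard = {x ∈ QS n | Even (Multiset.card x.2)}.ncard := by
    rw [LS_image]
    congr 1
    ext x
    simp only [sgL_join]
    refine and_congr_right fun _ => ?_
    rw [neg_one_pow_eq_one_iff_even (by decide)]
  have htot : {x ∈ QS n | Even (Multiset.card x.2)}.ncard +
      {x ∈ QS n | ¬ Even (Multiset.card x.2)}.ncard = (QS n).ncard := by
    rw [← Set.ncard_union_eq (hs := (finite_QS n).subset fun x hx => hx.1)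
      (ht := (finite_QS n).subset fun x hx => hx.1)]
    · congr 1
      ext x
      constructor
      · rintro (h | h) <;> exact h.1
      · intro h
        by_cases h' : Even (Multiset.card x.2)
        · left; exact ⟨h, h'⟩
        · right; exact ⟨h, h'⟩
    · rw [Set.disjoint_left]
      rintro x ⟨_, h⟩ ⟨_, h'⟩
      exact h' h
  have := parity_count n
  rw [hX, hF, hE, split_count]
  omega

end WC

namespace WC

section SP
variable {Ω : Type} {Ω' : Type}

/-- partial products along an orbit -/
def SS (σ : Equiv.Perm Ω) (ε : Ω → ℤˣ) (x : Ω) : ℕ → ℤˣ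
  | 0 => 1
  | k + 1 => SS σ ε x k * ε (σ^[k] x)

theorem SS_add (σ : Equiv.Perm Ω) (ε : Ω → ℤˣ) (x : Ω) (a b : ℕ) :
    SS σ ε x (a + b) = SS σ ε x a * SS σ ε (σ^[a] x) b := by
  induction b with
  | zero => simp [SS]
  | succ b ih =>
    rw [← Nat.add_assoc]
    simp only [SS]
    rw [ih, mul_assoc, add_comm a b, Function.iterate_add_apply]

theorem SS_one (σ : Equiv.Perm Ω) (ε : Ω → ℤˣ) (x : Ω) : SS σ ε x 1 = ε x := by
  simp [SS]

theorem SS_eq_prod (σ : Equiv.Perm Ω) (ε : Ω → ℤˣ) (x : Ω) (k : ℕ) :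
    SS σ ε x k = ∏ i ∈ Finset.range k, ε (σ^[i] x) := by
  induction k with
  | zero => simp [SS]
  | succ k ih => rw [Finset.prod_range_succ, ← ih]; rfl

theorem mp_pos [Finite Ω] (σ : Equiv.Perm Ω) (x : Ω) : 0 < Function.minimalPeriod σ x :=
  Function.minimalPeriod_pos_of_mem_periodicPts (σ.injective.mem_periodicPts x)

theorem it_mp (σ : Equiv.Perm Ω) (x : Ω) : σ^[Function.minimalPeriod σ x] x = x :=
  Function.isPeriodicPt_minimalPeriod σ x

/-- label of a point -/
noncomputable def labP [Finite Ω] (σ : Equiv.Perm Ω) (ε : Ω → ℤˣ) (x : Ω) : ℕ+ × ℤˣ :=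
  ((Function.minimalPeriod σ x).toPNat (mp_pos σ x), SS σ ε x (Function.minimalPeriod σ x))

theorem labP_eq_iff [Finite Ω] [Finite Ω'] (σ : Equiv.Perm Ω) (ε : Ω → ℤˣ) (x : Ω)
    (σ' : Equiv.Perm Ω') (ε' : Ω' → ℤˣ) (x' : Ω') : labP σ ε x = labP σ' ε' x' ↔
    Function.minimalPeriod σ x = Function.minimalPeriod σ' x' ∧
    SS σ ε x (Function.minimalPeriod σ x) = SS σ' ε' x' (Function.minimalPeriod σ' x') := by
  unfold labP
  rw [Prod.mk.injEq]
  constructor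
  · rintro ⟨h1, h2⟩
    exact ⟨congrArg PNat.val h1, h2⟩
  · rintro ⟨h1, h2⟩
    exact ⟨PNat.eq h1, h2⟩

theorem labP_apply [Finite Ω] (σ : Equiv.Perm Ω) (ε : Ω → ℤˣ) (x : Ω) :
    labP σ ε (σ x) = labP σ ε x := by
  have h1 : Function.minimalPeriod σ (σ x) = Function.minimalPeriod σ x :=
    Function.minimalPeriod_apply (σ.injective.mem_periodicPts x)
  rw [labP_eq_iff]
  refine ⟨h1, ?_⟩
  rw [h1]
  have h2 := SS_add σ ε x 1 (Function.minimalPeriod σ x)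
  have h3 := SS_add σ ε x (Function.minimalPeriod σ x) 1
  rw [add_comm, h3, it_mp, SS_one, mul_comm] at h2
  exact (mul_left_cancel h2).symm

theorem labP_iter [Finite Ω] (σ : Equiv.Perm Ω) (ε : Ω → ℤˣ) (x : Ω) (k : ℕ) :
    labP σ ε (σ^[k] x) = labP σ ε x := by
  induction k with
  | zero => rfl
  | succ k ih => rw [Function.iterate_succ_apply', labP_apply, ih]

theorem sc_iter [Finite Ω] (σ : Equiv.Perm Ω) (x y : Ω) :
    σ.SameCycle x y ↔ ∃ k : ℕ, σ^[k] x = y := by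
  constructor
  · intro h
    obtain ⟨k, hk⟩ := h.exists_nat_pow_eq
    exact ⟨k, by rw [Equiv.Perm.iterate_eq_pow]; exact hk⟩
  · rintro ⟨k, rfl⟩
    exact ⟨k, by rw [Equiv.Perm.iterate_eq_pow]; simp⟩

/-- the orbit set -/
abbrev QQ (σ : Equiv.Perm Ω) := Quotient (Equiv.Perm.SameCycle.setoid σ)

/-- labels of orbits -/
noncomputable def labQ [Finite Ω] (σ : Equiv.Perm Ω) (ε : Ω → ℤˣ) : QQ σ → ℕ+ × ℤˣ :=
  Quotient.lift (labP σ ε) (by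
    intro a b h
    obtain ⟨k, rfl⟩ := (sc_iter σ a b).1 h
    exact (labP_iter σ ε a k).symm)

noncomputable instance QQfin [Finite Ω] (σ : Equiv.Perm Ω) : Fintype (QQ σ) := Fintype.ofFinite _

/-- label multiset -/
noncomputable def LL [Finite Ω] (σ : Equiv.Perm Ω) (ε : Ω → ℤˣ) : LT :=
  (Finset.univ : Finset (QQ σ)).val.map (labQ σ ε)

/-- isomorphism of signed permutations -/
def Iso (σ : Equiv.Perm Ω) (ε : Ω → ℤˣ) (σ' : Equiv.Perm Ω') (ε' : Ω' → ℤˣ)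
    (τ : Ω ≃ Ω') (δ : Ω → ℤˣ) : Prop :=
  (∀ x, τ (σ x) = σ' (τ x)) ∧ ∀ x, δ (σ x) * ε x = ε' (τ x) * δ x

theorem Iso.iter {σ : Equiv.Perm Ω} {ε : Ω → ℤˣ} {σ' : Equiv.Perm Ω'} {ε' : Ω' → ℤˣ}
    {τ : Ω ≃ Ω'} {δ : Ω → ℤˣ} (h : Iso σ ε σ' ε' τ δ) (x : Ω) (k : ℕ) :
    τ (σ^[k] x) = σ'^[k] (τ x) := by
  induction k with
  | zero => rfl
  | succ k ih => rw [Function.iterate_succ_apply', h.1, ih, ← Function.iterate_succ_apply' σ']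

theorem Iso.SS {σ : Equiv.Perm Ω} {ε : Ω → ℤˣ} {σ' : Equiv.Perm Ω'} {ε' : Ω' → ℤˣ}
    {τ : Ω ≃ Ω'} {δ : Ω → ℤˣ} (h : Iso σ ε σ' ε' τ δ) (x : Ω) (k : ℕ) :
    SS σ' ε' (τ x) k * δ x = δ (σ^[k] x) * SS σ ε x k := by
  induction k with
  | zero => simp [WC.SS]
  | succ k ih =>
    simp only [WC.SS]
    rw [mul_right_comm, ih, Function.iterate_succ_apply', ← h.iter]
    have := h.2 (σ^[k] x)
    calc δ (σ^[k] x) * WC.SS σ ε x k * ε' (τ (σ^[k] x))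
        = (ε' (τ (σ^[k] x)) * δ (σ^[k] x)) * WC.SS σ ε x k := by ac_rfl
      _ = _ := by rw [← this]; ac_rfl

theorem Iso.labP [Finite Ω] [Finite Ω'] {σ : Equiv.Perm Ω} {ε : Ω → ℤˣ} {σ' : Equiv.Perm Ω'}
    {ε' : Ω' → ℤˣ} {τ : Ω ≃ Ω'} {δ : Ω → ℤˣ} (h : Iso σ ε σ' ε' τ δ) (x : Ω) :
    labP σ' ε' (τ x) = labP σ ε x := by
  have h1 : Function.minimalPeriod σ' (τ x) = Function.minimalPeriod σ x := by
    rw [Function.minimalPeriod_eq_minimalPeriod_iff]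
    intro k
    unfold Function.IsPeriodicPt Function.IsFixedPt
    rw [← h.iter, τ.injective.eq_iff]
  rw [labP_eq_iff]
  refine ⟨h1, ?_⟩
  have := h.SS x (Function.minimalPeriod σ x)
  rw [it_mp, mul_comm] at this
  rw [h1]
  exact mul_left_cancel this

theorem Iso.LL [Finite Ω] [Finite Ω'] {σ : Equiv.Perm Ω} {ε : Ω → ℤˣ} {σ' : Equiv.Perm Ω'}
    {ε' : Ω' → ℤˣ} {τ : Ω ≃ Ω'} {δ : Ω → ℤˣ} (h : Iso σ ε σ' ε' τ δ) :
    LL σ ε = LL σ' ε' := by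
  have hc : ∀ a b, σ.SameCycle a b ↔ σ'.SameCycle (τ a) (τ b) := by
    intro a b
    rw [sc_iter, sc_iter]
    simp only [← h.iter, τ.injective.eq_iff]
  let e : QQ σ ≃ QQ σ' := Quotient.congr τ hc
  unfold WC.LL
  rw [← Multiset.map_univ_val_equiv e, Multiset.map_map]
  congr 1
  funext q
  induction q using Quotient.inductionOn with
  | h x => exact (h.labP x).symm

theorem exists_equiv_of_map {A B C : Type} [Fintype A] [Fintype B] (f : A → C) (g : B → C)
    (h : (Finset.univ : Finset A).val.map f = (Finset.univ : Finset B).val.map g) :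
    ∃ e : A ≃ B, ∀ a, g (e a) = f a := by
  classical
  have hc : ∀ c, Nonempty ({a // f a = c} ≃ {b // g b = c}) := by
    intro c
    rw [← Fintype.card_eq]
    have := congrArg (Multiset.count c) h
    rw [Multiset.count_map, Multiset.count_map] at this
    rw [Fintype.card_subtype, Fintype.card_subtype]
    simp only [Finset.card_def, Finset.filter_val]
    simpa only [eq_comm (a := c)] using this
  exact ⟨Equiv.ofFiberEquiv fun c => (hc c).some, fun a => Equiv.ofFiberEquiv_map _ a⟩

theorem SS_mul_mp (σ : Equiv.Perm Ω) (ε : Ω → ℤˣ) (x : Ω) (q : ℕ) :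
    SS σ ε x (Function.minimalPeriod σ x * q) = SS σ ε x (Function.minimalPeriod σ x) ^ q := by
  induction q with
  | zero => simp [SS]
  | succ q ih =>
    rw [Nat.mul_succ, add_comm, SS_add, it_mp, ih, pow_succ, mul_comm]

theorem it_mul_mp (σ : Equiv.Perm Ω) (x : Ω) (q : ℕ) :
    σ^[Function.minimalPeriod σ x * q] x = x := by
  have : Function.IsPeriodicPt σ (Function.minimalPeriod σ x * q) x :=
    (Function.isPeriodicPt_minimalPeriod σ x).mul_const q
  exact this

theorem lemW_le [Finite Ω] [Finite Ω'] (σ : Equiv.Perm Ω) (ε : Ω → ℤˣ) (x : Ω)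
    (σ' : Equiv.Perm Ω') (ε' : Ω' → ℤˣ) (x' : Ω') (hl : labP σ ε x = labP σ' ε' x')
    (a b : ℕ) (hab : a ≤ b) (h : σ^[a] x = σ^[b] x) :
    σ'^[a] x' = σ'^[b] x' ∧ SS σ ε x a * SS σ' ε' x' a = SS σ ε x b * SS σ' ε' x' b := by
  obtain ⟨h1, h2⟩ := (labP_eq_iff ..).1 hl
  obtain ⟨d, rfl⟩ := Nat.exists_eq_add_of_le hab
  rw [Function.iterate_add_apply] at h
  have h3 : σ^[d] x = x := ((σ.injective.iterate a) h).symm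
  have h4 : Function.minimalPeriod σ x ∣ d := Function.IsPeriodicPt.minimalPeriod_dvd h3
  obtain ⟨q, rfl⟩ := h4
  have e2 : σ'^[Function.minimalPeriod σ x * q] x' = x' := by rw [h1]; exact it_mul_mp _ _ _
  refine ⟨by rw [Function.iterate_add_apply, e2], ?_⟩
  rw [add_comm a, SS_add, SS_add, SS_mul_mp, it_mul_mp, e2, h1, SS_mul_mp, ← h1, h2, ← h1]
  have : ∀ u v w : ℤˣ, u * v = w * u * (w * v) := by
    intro u v w
    calc u * v = (w * w) * (u * v) := by rw [Int.units_mul_self, one_mul]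
      _ = _ := by ac_rfl
  exact this _ _ _

theorem lemW [Finite Ω] [Finite Ω'] (σ : Equiv.Perm Ω) (ε : Ω → ℤˣ) (x : Ω)
    (σ' : Equiv.Perm Ω') (ε' : Ω' → ℤˣ) (x' : Ω') (hl : labP σ ε x = labP σ' ε' x')
    (a b : ℕ) (h : σ^[a] x = σ^[b] x) :
    σ'^[a] x' = σ'^[b] x' ∧ SS σ ε x a * SS σ' ε' x' a = SS σ ε x b * SS σ' ε' x' b := by
  rcases le_total a b with hab | hab
  · exact lemW_le σ ε x σ' ε' x' hl a b hab h
  · have := lemW_le σ ε x σ' ε' x' hl b a hab h.symm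
    exact ⟨this.1.symm, this.2.symm⟩

theorem exists_kk [Finite Ω] (σ : Equiv.Perm Ω) : ∃ k : Ω → ℕ, ∀ y,
    σ^[k y] (Quotient.out (s := Equiv.Perm.SameCycle.setoid σ)
      (Quotient.mk (Equiv.Perm.SameCycle.setoid σ) y)) = y := by
  have : ∀ y, ∃ k, σ^[k] (Quotient.out (s := Equiv.Perm.SameCycle.setoid σ)
      (Quotient.mk (Equiv.Perm.SameCycle.setoid σ) y)) = y := by
    intro y
    exact (sc_iter σ _ _).1 (Quotient.mk_out (s := Equiv.Perm.SameCycle.setoid σ) y)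
  choose k hk using this
  exact ⟨k, hk⟩

theorem mk_apply (σ : Equiv.Perm Ω) (y : Ω) :
    (Quotient.mk (Equiv.Perm.SameCycle.setoid σ) (σ y)) =
      Quotient.mk (Equiv.Perm.SameCycle.setoid σ) y := by
  apply Quotient.sound
  change σ.SameCycle (σ y) y
  exact Equiv.Perm.sameCycle_apply_left.2 (Equiv.Perm.SameCycle.refl _ _)

theorem mk_iter [Finite Ω] (σ : Equiv.Perm Ω) (y : Ω) (k : ℕ) :
    (Quotient.mk (Equiv.Perm.SameCycle.setoid σ) (σ^[k] y)) =
      Quotient.mk (Equiv.Perm.SameCycle.setoid σ) y := by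
  apply Quotient.sound
  change σ.SameCycle _ y
  exact ((sc_iter σ _ _).2 ⟨k, rfl⟩).symm

theorem labP_out [Finite Ω] (σ : Equiv.Perm Ω) (ε : Ω → ℤˣ) (q : QQ σ) :
    labP σ ε q.out = labQ σ ε q := by
  conv_rhs => rw [← q.out_eq]
  rfl

theorem iso_of_LL [Finite Ω] [Finite Ω'] (σ : Equiv.Perm Ω) (ε : Ω → ℤˣ)
    (σ' : Equiv.Perm Ω') (ε' : Ω' → ℤˣ) (h : LL σ ε = LL σ' ε') :
    ∃ τ δ, Iso σ ε σ' ε' τ δ := by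
  obtain ⟨e, he⟩ := exists_equiv_of_map (labQ σ ε) (labQ σ' ε') h
  obtain ⟨k, hk⟩ := exists_kk σ
  obtain ⟨k', hk'⟩ := exists_kk σ'
  have hl : ∀ q : QQ σ, labP σ ε q.out = labP σ' ε' (e q).out := by
    intro q; rw [labP_out, labP_out, he]
  let f : Ω → Ω' := fun y => σ'^[k y] (e ⟦y⟧).out
  let g : Ω' → Ω := fun y => σ^[k' y] (e.symm ⟦y⟧).out
  have hf : ∀ (q : QQ σ) (a : ℕ), f (σ^[a] q.out) = σ'^[a] (e q).out ∧
      SS σ ε q.out (k (σ^[a] q.out)) * SS σ' ε' (e q).out (k (σ^[a] q.out)) =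
      SS σ ε q.out a * SS σ' ε' (e q).out a := by
    intro q a
    have h1 : (⟦σ^[a] q.out⟧ : QQ σ) = q := by rw [mk_iter, Quotient.out_eq]
    have h2 := hk (σ^[a] q.out)
    rw [h1] at h2
    have := lemW σ ε q.out σ' ε' (e q).out (hl q) _ _ h2
    refine ⟨?_, this.2⟩
    rw [← this.1]
    change σ'^[k (σ^[a] q.out)] (e ⟦σ^[a] q.out⟧).out = _
    rw [h1]
  have hg : ∀ (q : QQ σ') (a : ℕ), g (σ'^[a] q.out) = σ^[a] (e.symm q).out := by
    intro q a
    have h1 : (⟦σ'^[a] q.out⟧ : QQ σ') = q := by rw [mk_iter, Quotient.out_eq]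
    have h2 := hk' (σ'^[a] q.out)
    rw [h1] at h2
    have := lemW σ' ε' q.out σ ε (e.symm q).out (by rw [hl, e.apply_symm_apply]) _ _ h2
    rw [← this.1]
    change σ^[k' (σ'^[a] q.out)] (e.symm ⟦σ'^[a] q.out⟧).out = _
    rw [h1]
  let τ : Ω ≃ Ω' := ⟨f, g, by
    intro y
    change g (σ'^[k y] (e ⟦y⟧).out) = y
    rw [hg, e.symm_apply_apply, hk], by
    intro y
    change f (σ^[k' y] (e.symm ⟦y⟧).out) = y
    rw [(hf _ _).1, e.apply_symm_apply, hk']⟩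
  let δ : Ω → ℤˣ := fun y => SS σ ε (Quotient.out (⟦y⟧ : QQ σ)) (k y) * SS σ' ε' (e ⟦y⟧).out (k y)
  have hδ : ∀ (q : QQ σ) (a : ℕ), δ (σ^[a] q.out) = SS σ ε q.out a * SS σ' ε' (e q).out a := by
    intro q a
    have h1 : (⟦σ^[a] q.out⟧ : QQ σ) = q := by rw [mk_iter, Quotient.out_eq]
    change SS σ ε (Quotient.out (⟦σ^[a] q.out⟧ : QQ σ)) _ * SS σ' ε' (e ⟦σ^[a] q.out⟧).out _ = _
    rw [h1]
    exact (hf q a).2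
  refine ⟨τ, δ, ?_, ?_⟩
  · intro x
    obtain ⟨q, a, rfl⟩ : ∃ (q : QQ σ) (a : ℕ), x = σ^[a] q.out := ⟨⟦x⟧, k x, (hk x).symm⟩
    change f _ = σ' (f _)
    rw [← Function.iterate_succ_apply' σ, (hf _ _).1, (hf _ _).1, Function.iterate_succ_apply' σ']
  · intro x
    obtain ⟨q, a, rfl⟩ : ∃ (q : QQ σ) (a : ℕ), x = σ^[a] q.out := ⟨⟦x⟧, k x, (hk x).symm⟩
    change _ = ε' (f _) * _
    rw [← Function.iterate_succ_apply' σ, hδ, hδ, (hf _ _).1]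
    simp only [SS]
    generalize SS σ ε q.out a = A
    generalize SS σ' ε' (e q).out a = B
    calc A * ε (σ^[a] q.out) * (B * ε' (σ'^[a] (e q).out)) * ε (σ^[a] q.out)
      = (ε (σ^[a] q.out) * ε (σ^[a] q.out)) * (ε' (σ'^[a] (e q).out) * (A * B)) := by ac_rfl
      _ = _ := by rw [Int.units_mul_self, one_mul]

end SP
end WC

namespace WC

section SP
variable {Ω : Type} [Fintype Ω]

open Classical in
theorem orb_prod {A : Type} [CommMonoid A] (σ : Equiv.Perm Ω) (g : Ω → A) (q : QQ σ) :
    ∏ y with (Quotient.mk (Equiv.Perm.SameCycle.setoid σ) y) = q, g y =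
      ∏ i ∈ Finset.range (Function.minimalPeriod σ q.out), g (σ^[i] q.out) := by
  have him : (Finset.univ.filter fun y => (Quotient.mk (Equiv.Perm.SameCycle.setoid σ) y) = q) =
      (Finset.range (Function.minimalPeriod σ q.out)).image (fun i => σ^[i] q.out) := by
    ext y
    simp only [Finset.mem_filter, Finset.mem_univ, true_and, Finset.mem_image, Finset.mem_range]
    constructor
    · rintro rfl
      obtain ⟨k, hk⟩ := exists_kk σ
      refine ⟨k y % _, Nat.mod_lt _ (mp_pos σ _), ?_⟩
      rw [Function.iterate_mod_minimalPeriod_eq]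
      exact hk y
    · rintro ⟨i, -, rfl⟩
      rw [mk_iter, Quotient.out_eq]
  rw [him, Finset.prod_image]
  intro a ha b hb hab
  simp only [Finset.coe_range, Set.mem_Iio] at ha hb
  exact (Function.iterate_eq_iterate_iff_of_lt_minimalPeriod ha hb).1 hab

theorem tot_prod {A : Type} [CommMonoid A] (σ : Equiv.Perm Ω) (g : Ω → A) :
    ∏ y, g y = ∏ q : QQ σ, ∏ i ∈ Finset.range (Function.minimalPeriod σ q.out),
      g (σ^[i] q.out) := by
  classical
  rw [← Finset.prod_fiberwise _ (fun y => (Quotient.mk (Equiv.Perm.SameCycle.setoid σ) y)) g]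
  exact Finset.prod_congr rfl fun q _ => orb_prod σ g q

theorem labQ_fst (σ : Equiv.Perm Ω) (ε : Ω → ℤˣ) (q : QQ σ) :
    ((labQ σ ε q).1 : ℕ) = Function.minimalPeriod σ q.out := by
  rw [← labP_out]; rfl

theorem labQ_snd (σ : Equiv.Perm Ω) (ε : Ω → ℤˣ) (q : QQ σ) :
    (labQ σ ε q).2 = ∏ i ∈ Finset.range (Function.minimalPeriod σ q.out), ε (σ^[i] q.out) := by
  rw [← labP_out, ← SS_eq_prod]; rfl

theorem szL_LL (σ : Equiv.Perm Ω) (ε : Ω → ℤˣ) : szL (LL σ ε) = Fintype.card Ω := by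
  have h := tot_prod σ (fun _ => (2 : ℕ))
  simp only [Finset.prod_const, Finset.card_range, Finset.card_univ] at h
  rw [Finset.prod_pow_eq_pow_sum] at h
  rw [Nat.pow_right_injective (le_refl 2) h]
  simp only [← labQ_fst σ ε]
  unfold szL LL
  rw [Multiset.map_map]
  rfl

theorem sgL_LL (σ : Equiv.Perm Ω) (ε : Ω → ℤˣ) : sgL (LL σ ε) = ∏ y, ε y := by
  rw [tot_prod σ ε]
  simp only [← labQ_snd]
  unfold sgL LL
  rw [Multiset.map_map]
  rfl

theorem splitL_LL (σ : Equiv.Perm Ω) (ε : Ω → ℤˣ) : SplitL (LL σ ε) ↔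
    ∀ q : QQ σ, (labQ σ ε q).2 = 1 ∧ Even ((labQ σ ε q).1 : ℕ) := by
  unfold SplitL LL
  simp

theorem aut_neg (σ : Equiv.Perm Ω) (ε : Ω → ℤˣ) (h : ¬ SplitL (LL σ ε)) :
    ∃ τ δ, Iso σ ε σ ε τ δ ∧ ∏ y, δ y = -1 := by
  classical
  rw [splitL_LL] at h
  push Not at h
  obtain ⟨q, hq⟩ := h
  by_cases h1 : (labQ σ ε q).2 = 1
  · have h2 := hq h1
    rw [Nat.not_even_iff_odd, labQ_fst] at h2
    refine ⟨Equiv.refl _, fun y => if Quotient.mk (Equiv.Perm.SameCycle.setoid σ) y = q then -1 else 1,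
      ⟨fun x => rfl, fun x => ?_⟩, ?_⟩
    · beta_reduce; rw [mk_apply, mul_comm]; rfl
    · rw [← Finset.prod_filter, orb_prod]
      simp [h2.neg_one_pow]
  · have h2 : (labQ σ ε q).2 = -1 := (Int.units_eq_one_or _).resolve_left h1
    have hc : ∀ y, σ.SameCycle q.out y ↔ Quotient.mk (Equiv.Perm.SameCycle.setoid σ) y = q := by
      intro y
      conv_rhs => rw [eq_comm, ← q.out_eq, Quotient.eq]
      rfl
    have hτ : ∀ y, σ.cycleOf q.out y =
        if Quotient.mk (Equiv.Perm.SameCycle.setoid σ) y = q then σ y else y := by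
      intro y
      rw [Equiv.Perm.cycleOf_apply]
      simp only [hc]
    refine ⟨σ.cycleOf q.out, fun y =>
      if Quotient.mk (Equiv.Perm.SameCycle.setoid σ) y = q then ε y else 1,
      ⟨fun x => ?_, fun x => ?_⟩, ?_⟩
    · rw [hτ, hτ, mk_apply]
      split_ifs <;> rfl
    · beta_reduce; rw [hτ, mk_apply]
      split_ifs
      · rfl
      · rw [mul_comm]
    · rw [← Finset.prod_filter, orb_prod, ← labQ_snd, h2]

theorem aut_pos (σ : Equiv.Perm Ω) (ε : Ω → ℤˣ) (h : SplitL (LL σ ε))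
    (τ : Equiv.Perm Ω) (δ : Ω → ℤˣ) (hi : Iso σ ε σ ε τ δ) : ∏ y, δ y = 1 := by
  rw [splitL_LL] at h
  obtain ⟨k, hk⟩ := exists_kk σ
  have hS1 : ∀ x a, SS σ (fun _ => 1) x a = 1 := by
    intro x a; rw [SS_eq_prod]; simp
  let η : Ω → ℤˣ := fun y => SS σ ε (Quotient.out (Quotient.mk (Equiv.Perm.SameCycle.setoid σ) y)) (k y)
  have hη : ∀ y, η (σ y) = η y * ε y := by
    intro y
    set x := Quotient.out (Quotient.mk (Equiv.Perm.SameCycle.setoid σ) y) with hx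
    have e1 : η (σ y) = SS σ ε x (k (σ y)) := by
      change SS σ ε (Quotient.out (Quotient.mk (Equiv.Perm.SameCycle.setoid σ) (σ y))) _ = _
      rw [mk_apply]
    have e2 : η y * ε y = SS σ ε x (k y + 1) := by
      change SS σ ε x (k y) * ε y = SS σ ε x (k y) * ε (σ^[k y] x)
      rw [hx, hk]
    rw [e1, e2]
    have hl : labP σ ε x = labP σ (fun _ => 1) x := by
      rw [labP_eq_iff]
      refine ⟨rfl, ?_⟩
      rw [hS1, SS_eq_prod, hx, ← labQ_snd]
      exact (h _).1
    have h3 := (lemW σ ε x σ (fun _ => 1) x hl (k (σ y)) (k y + 1) (by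
      have := hk (σ y)
      rw [mk_apply, ← hx] at this
      rw [this, Function.iterate_succ_apply', hx, hk])).2
    rwa [hS1, hS1, mul_one, mul_one] at h3
  let δ' : Ω → ℤˣ := fun y => δ y * (η (τ y) * η y)
  have hδ' : ∀ y, δ' (σ y) = δ' y := by
    intro y
    change δ (σ y) * (η (τ (σ y)) * η (σ y)) = δ y * (η (τ y) * η y)
    rw [hi.1, hη, hη]
    calc _ = (δ (σ y) * ε y) * ε (τ y) * (η (τ y) * η y) := by ac_rfl
      _ = (ε (τ y) * ε (τ y)) * (δ y * (η (τ y) * η y)) := by rw [hi.2]; ac_rfl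
      _ = _ := by rw [Int.units_mul_self, one_mul]
  have hδi : ∀ x i, δ' (σ^[i] x) = δ' x := by
    intro x i
    induction i with
    | zero => rfl
    | succ i ih => rw [Function.iterate_succ_apply', hδ', ih]
  have h1 : ∏ y, δ' y = 1 := by
    rw [tot_prod σ]
    simp only [hδi, Finset.prod_const, Finset.card_range]
    apply Finset.prod_eq_one
    intro q _
    have := (h q).2
    rw [labQ_fst] at this
    obtain ⟨r, hr⟩ := this
    rw [hr, pow_add, Int.units_mul_self]
  have h2 : ∏ y, δ' y = ∏ y, δ y := by
    change ∏ y, δ y * (η (τ y) * η y) = _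
    rw [Finset.prod_mul_distrib, Finset.prod_mul_distrib, Equiv.prod_comp τ η, Int.units_mul_self,
      mul_one]
  rw [← h2, h1]

/-- the realisation space -/
abbrev RS (M : LT) : Type := Σ i : M, ZMod (i.1.1 : ℕ)

/-- the realisation permutation -/
def Rσ (M : LT) : Equiv.Perm (RS M) := Equiv.sigmaCongrRight fun _ => Equiv.addRight 1

/-- the realisation signs -/
def Rε (M : LT) (x : RS M) : ℤˣ := if x.2 = 0 then x.1.1.2 else 1

instance (m : ℕ+) : NeZero (m : ℕ) := ⟨m.ne_zero⟩

theorem Rσ_iter (M : LT) (i : M) (k : ℕ) (a : ZMod (i.1.1 : ℕ)) :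
    (Rσ M)^[k] ⟨i, a⟩ = ⟨i, a + k⟩ := by
  induction k with
  | zero => simp
  | succ k ih =>
    rw [Function.iterate_succ_apply', ih]
    simp [Rσ, add_assoc]

theorem R_labP (M : LT) (i : M) : labP (Rσ M) (Rε M) ⟨i, 0⟩ = i.1 := by
  have h1 : Function.minimalPeriod (Rσ M) ⟨i, 0⟩ = (i.1.1 : ℕ) := by
    apply Nat.dvd_antisymm
    · apply Function.IsPeriodicPt.minimalPeriod_dvd
      change (Rσ M)^[_] _ = _
      rw [Rσ_iter]; simp
    · have := it_mp (Rσ M) ⟨i, 0⟩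
      rw [Rσ_iter] at this
      simpa [ZMod.natCast_eq_zero_iff] using this
  have h2 : SS (Rσ M) (Rε M) ⟨i, 0⟩ (i.1.1 : ℕ) = i.1.2 := by
    rw [SS_eq_prod, Finset.prod_eq_single 0]
    · exact if_pos rfl
    · intro b hb hb0
      rw [Rσ_iter]
      unfold Rε
      rw [if_neg]
      simp only [zero_add]
      rw [ZMod.natCast_eq_zero_iff]
      intro hd
      exact absurd (Nat.le_of_dvd (Nat.pos_of_ne_zero hb0) hd) (by simpa using hb)
    · intro h
      simp at h
  refine Prod.ext ?_ ?_
  · apply PNat.eq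
    exact h1
  · change SS (Rσ M) (Rε M) ⟨i, 0⟩ _ = _
    rw [h1, h2]

theorem R_LL (M : LT) : LL (Rσ M) (Rε M) = M := by
  have hsc : ∀ x y : RS M, (Rσ M).SameCycle x y ↔ x.1 = y.1 := by
    rintro ⟨i, a⟩ ⟨j, b⟩
    rw [sc_iter]
    constructor
    · rintro ⟨k, hk⟩
      rw [Rσ_iter] at hk
      exact (Sigma.mk.inj_iff.1 hk).1
    · rintro h
      dsimp only at h
      subst h
      refine ⟨(b - a).val, ?_⟩
      rw [Rσ_iter]
      simp
  let e : M ≃ QQ (Rσ M) := Equiv.ofBijective (fun i => ⟦⟨i, 0⟩⟧) (by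
    constructor
    · intro i j h
      exact (hsc _ _).1 (Quotient.exact h)
    · intro q
      induction q using Quotient.inductionOn with
      | h x => exact ⟨x.1, Quotient.sound ((hsc _ _).2 rfl)⟩)
  unfold LL
  rw [← Multiset.map_univ_val_equiv e, Multiset.map_map]
  conv_rhs => rw [← Multiset.map_univ_coe M]
  congr 1
  funext i
  exact R_labP M i

theorem realize (n : ℕ) (M : LT) (h : szL M = n) :
    ∃ (σ : Equiv.Perm (Fin n)) (ε : Fin n → ℤˣ), LL σ ε = M := by
  have h1 : Fintype.card (RS M) = n := by rw [← szL_LL (Rσ M) (Rε M), R_LL, h]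
  let e : RS M ≃ Fin n := Fintype.equivFinOfCardEq h1
  refine ⟨(e.symm.trans (Rσ M)).trans e, fun i => Rε M (e.symm i), ?_⟩
  rw [← Iso.LL (τ := e) (δ := fun _ => 1) (σ := Rσ M) (ε := Rε M), R_LL]
  constructor
  · intro x; simp
  · intro x; simp

end SP
end WC

namespace WC

theorem Iso.trans {A B C : Type} {σ : Equiv.Perm A} {ε : A → ℤˣ} {σ' : Equiv.Perm B} {ε' : B → ℤˣ}
    {σ'' : Equiv.Perm C} {ε'' : C → ℤˣ} {τ : A ≃ B} {δ : A → ℤˣ} {τ' : B ≃ C} {δ' : B → ℤˣ}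
    (h : Iso σ ε σ' ε' τ δ) (h' : Iso σ' ε' σ'' ε'' τ' δ') :
    Iso σ ε σ'' ε'' (τ.trans τ') (fun x => δ' (τ x) * δ x) := by
  constructor
  · intro x
    simp only [Equiv.trans_apply]
    rw [h.1, h'.1]
  · intro x
    simp only [Equiv.trans_apply]
    rw [mul_assoc, h.2, h.1, ← mul_assoc, h'.2, mul_assoc]

theorem trans_prod {A B : Type} [Fintype A] [Fintype B] (τ : A ≃ B) (δ : A → ℤˣ) (δ' : B → ℤˣ) :
    ∏ x, (δ' (τ x) * δ x) = (∏ x, δ' x) * ∏ x, δ x := by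
  rw [Finset.prod_mul_distrib, Equiv.prod_comp τ δ']

theorem sgL_of_split (M : LT) (h : SplitL M) : sgL M = 1 := by
  unfold sgL
  apply Multiset.prod_eq_one
  intro x hx
  obtain ⟨y, hy, rfl⟩ := Multiset.mem_map.1 hx
  exact (h y hy).1

theorem count {n : ℕ} (hn : 0 < n) (G : Type) [Group G] [Finite G] (s : G → Equiv.Perm (Fin n))
    (e : G → Fin n → ℤˣ) (he : ∀ g, ∏ x, e g x = 1)
    (hs : ∀ σ ε, ∏ x, ε x = 1 → ∃ g, s g = σ ∧ e g = ε)
    (hc : ∀ g h, IsConj g h ↔ ∃ τ δ, Iso (s g) (e g) (s h) (e h) τ δ ∧ ∏ x, δ x = 1) :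
    Nat.card (ConjClasses G) =
      {M ∈ LS n | sgL M = 1}.ncard + {M ∈ LS n | SplitL M}.ncard := by
  classical
  have hE : ({M ∈ LS n | sgL M = 1}).Finite := (finite_LS n).subset fun M hM => hM.1
  let E : Finset LT := hE.toFinset
  have hmE : ∀ M, M ∈ E ↔ szL M = n ∧ sgL M = 1 := fun M => hE.mem_toFinset
  have hsz : ∀ σ : Equiv.Perm (Fin n), ∀ ε, szL (LL σ ε) = n := by
    intro σ ε; rw [szL_LL, Fintype.card_fin]
  let lab : ConjClasses G → LT := Quotient.lift (fun g => LL (s g) (e g)) (by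
    intro a b hab
    obtain ⟨τ, δ, h, -⟩ := (hc a b).1 hab
    exact h.LL)
  have hlab : ∀ g, lab (ConjClasses.mk g) = LL (s g) (e g) := fun g => rfl
  let _ : Fintype (ConjClasses G) := Fintype.ofFinite _
  have hmaps : ∀ c ∈ (Finset.univ : Finset (ConjClasses G)), lab c ∈ E := by
    intro c _
    obtain ⟨g, rfl⟩ := ConjClasses.exists_rep c
    · rw [hmE, hlab, sgL_LL]
      exact ⟨hsz _ _, he g⟩
  have hfib : ∀ M ∈ E, (Finset.univ.filter fun c : ConjClasses G => lab c = M).card =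
      1 + if SplitL M then 1 else 0 := by
    intro M hM
    obtain ⟨h1, h2⟩ := (hmE M).1 hM
    obtain ⟨σ, ε, hσ⟩ := realize n M h1
    obtain ⟨g, hg1, hg2⟩ := hs σ ε (by rw [← sgL_LL σ ε, hσ, h2])
    subst hg1 hg2
    split_ifs with hsp
    · let p : Fin n := ⟨0, hn⟩
      let d : Fin n → ℤˣ := fun x => if x = p then -1 else 1
      have hd : ∏ x, d x = -1 := by
        change (∏ x, if x = p then (-1 : ℤˣ) else 1) = -1
        rw [Finset.prod_ite_eq' Finset.univ p]
        simp
      obtain ⟨g', hg1, hg2⟩ := hs (s g) (fun x => d (s g x) * e g x * d x) (by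
        rw [Finset.prod_mul_distrib, Finset.prod_mul_distrib, Equiv.prod_comp (s g) d, hd, he]
        rfl)
      have i1 : Iso (s g) (e g) (s g') (e g') (Equiv.refl _) d := by
        refine ⟨fun x => by rw [hg1]; rfl, fun x => ?_⟩
        rw [hg2]
        change _ = d (s g x) * e g x * d x * d x
        rw [mul_assoc _ (d x), Int.units_mul_self, mul_one]
      have i2 : Iso (s g') (e g') (s g) (e g) (Equiv.refl _) d := by
        refine ⟨fun x => by rw [hg1]; rfl, fun x => ?_⟩
        rw [hg2, hg1]
        change d (s g x) * (d (s g x) * e g x * d x) = e g x * d x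
        rw [mul_assoc, ← mul_assoc, Int.units_mul_self, one_mul]
      rw [Finset.card_eq_two]
      refine ⟨ConjClasses.mk g, ConjClasses.mk g', ?_, ?_⟩
      · intro heq
        rw [ConjClasses.mk_eq_mk_iff_isConj, hc] at heq
        obtain ⟨τ, δ, hi, hp⟩ := heq
        have := aut_pos (s g) (e g) (by rw [hσ]; exact hsp) _ _ (hi.trans i2)
        rw [trans_prod, hd, hp] at this
        exact absurd this (by decide)
      · ext c
        obtain ⟨h, rfl⟩ := ConjClasses.exists_rep c
        simp only [Finset.mem_filter, Finset.mem_univ, true_and, Finset.mem_insert,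
          Finset.mem_singleton]
        constructor
        · intro hh
          rw [hlab, ← hσ] at hh
          obtain ⟨τ, δ, hi⟩ := iso_of_LL _ _ _ _ hh.symm
          rcases Int.units_eq_one_or (∏ x, δ x) with hp | hp
          · left
            rw [eq_comm, ConjClasses.mk_eq_mk_iff_isConj, hc]
            exact ⟨τ, δ, hi, hp⟩
          · right
            rw [eq_comm, ConjClasses.mk_eq_mk_iff_isConj, hc]
            refine ⟨_, _, i2.trans hi, ?_⟩
            rw [trans_prod, hd, hp]
            rfl
        · rintro (hh | hh)
          · rw [hh, hlab, hσ]
          · rw [hh, hlab, ← i1.LL, hσ]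
    · rw [add_zero, Finset.card_eq_one]
      refine ⟨ConjClasses.mk g, ?_⟩
      ext c
      obtain ⟨h, rfl⟩ := ConjClasses.exists_rep c
      simp only [Finset.mem_filter, Finset.mem_univ, true_and, Finset.mem_singleton]
      constructor
      · intro hh
        rw [hlab, ← hσ] at hh
        obtain ⟨τ, δ, hi⟩ := iso_of_LL _ _ _ _ hh.symm
        rw [eq_comm, ConjClasses.mk_eq_mk_iff_isConj, hc]
        rcases Int.units_eq_one_or (∏ x, δ x) with hp | hp
        · exact ⟨τ, δ, hi, hp⟩
        · obtain ⟨τ', δ', hi', hp'⟩ := aut_neg (s g) (e g) (by rw [hσ]; exact hsp)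
          refine ⟨_, _, hi'.trans hi, ?_⟩
          rw [trans_prod, hp, hp']
          rfl
      · intro hh
        rw [hh, hlab, hσ]
  rw [Nat.card_eq_fintype_card, ← Finset.card_univ, Finset.card_eq_sum_card_fiberwise hmaps,
    Finset.sum_congr rfl hfib, Finset.sum_add_distrib, ← Finset.card_eq_sum_ones,
    ← Finset.card_filter, Set.ncard_eq_toFinset_card _ hE]
  congr 1
  rw [← Set.ncard_coe_finset]
  congr 1
  ext M
  simp only [Finset.coe_filter, Set.mem_ofPred_eq, hmE]
  exact ⟨fun h => ⟨h.1.1, h.2⟩, fun h => ⟨⟨h.1, sgL_of_split M h.2⟩, h.2⟩⟩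

end WC

namespace WC

/-- matrix of a signed permutation -/
def toM {n : ℕ} (σ : Equiv.Perm (Fin n)) (ε : Fin n → ℤˣ) : Matrix (Fin n) (Fin n) ℤ :=
  Matrix.of fun i j => if σ j = i then (ε j : ℤ) else 0

theorem toM_apply {n : ℕ} (σ : Equiv.Perm (Fin n)) (ε : Fin n → ℤˣ) (i j : Fin n) :
    toM σ ε i j = if σ j = i then (ε j : ℤ) else 0 := rfl

theorem toM_mul {n : ℕ} (τ σ : Equiv.Perm (Fin n)) (δ ε : Fin n → ℤˣ) :
    toM τ δ * toM σ ε = toM (σ.trans τ) (fun j => δ (σ j) * ε j) := by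
  ext i j
  rw [Matrix.mul_apply, Finset.sum_eq_single (σ j)]
  · simp only [toM_apply, if_true, Equiv.trans_apply, ite_mul, zero_mul, Units.val_mul]
    congr
  · intro b _ hb
    simp only [toM_apply]
    rw [if_neg (c := σ j = b) (Ne.symm hb), mul_zero]
  · simp

theorem toM_one {n : ℕ} : toM (1 : Equiv.Perm (Fin n)) (fun _ => 1) = 1 := by
  ext i j
  simp only [toM_apply]
  rw [Matrix.one_apply]
  simp [eq_comm]

theorem toM_inj {n : ℕ} {τ σ : Equiv.Perm (Fin n)} {δ ε : Fin n → ℤˣ}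
    (h : toM τ δ = toM σ ε) : τ = σ ∧ δ = ε := by
  have h1 : ∀ j, τ j = σ j ∧ δ j = ε j := by
    intro j
    have := congrFun (congrFun h (τ j)) j
    rw [toM_apply, toM_apply] at this
    rw [if_pos rfl] at this
    by_cases hj : σ j = τ j
    · rw [if_pos hj] at this
      exact ⟨hj.symm, Units.ext this⟩
    · rw [if_neg hj] at this
      exact absurd this (δ j).ne_zero
  exact ⟨Equiv.ext fun j => (h1 j).1, funext fun j => (h1 j).2⟩

theorem toM_signed {n : ℕ} (σ : Equiv.Perm (Fin n)) (ε : Fin n → ℤˣ) : IsSignedPerm (toM σ ε) := by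
  have hne : ∀ i j, toM σ ε i j ≠ 0 ↔ σ j = i := by
    intro i j
    simp only [toM_apply]
    split_ifs with h <;> simp [h]
  refine ⟨?_, ?_, ?_⟩
  · intro i j
    simp only [toM_apply]
    split_ifs
    · right
      rcases Int.units_eq_one_or (ε j) with h | h <;> simp [h]
    · left; rfl
  · intro i
    simp only [hne]
    exact ⟨σ.symm i, by simp, fun j hj => by simp [← hj]⟩
  · intro j
    simp only [hne]
    exact ⟨σ j, rfl, fun i hi => hi.symm⟩

theorem exists_toM {n : ℕ} (M : Matrix (Fin n) (Fin n) ℤ) (h : IsSignedPerm M) :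
    ∃ σ ε, M = toM σ ε := by
  obtain ⟨h1, h2, h3⟩ := h
  choose f hf hf' using h3
  have hinj : Function.Injective f := by
    intro a b hab
    refine (h2 (f a)).unique (hf a) ?_
    rw [hab]; exact hf b
  let σ : Equiv.Perm (Fin n) := Equiv.ofBijective f (Finite.injective_iff_bijective.1 hinj)
  refine ⟨σ, fun j => if M (f j) j = 1 then 1 else -1, ?_⟩
  ext i j
  simp only [toM_apply]
  change _ = if f j = i then _ else _
  by_cases hj : f j = i
  · subst hj
    rw [if_pos rfl]
    rcases h1 (f j) j with h | h | h
    · exact absurd h (hf j)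
    · simp [h]
    · simp [h]
  · rw [if_neg hj]
    by_contra hne
    exact hj (hf' j i hne).symm

theorem toM_weyl {n : ℕ} (σ : Equiv.Perm (Fin n)) (ε : Fin n → ℤˣ) :
    IsWeylD (toM σ ε) ↔ ∏ j, ε j = 1 := by
  unfold IsWeylD
  rw [and_iff_right (toM_signed σ ε)]
  have h1 : (Finset.univ.filter fun p : Fin n × Fin n => toM σ ε p.1 p.2 = -1).card =
      (Finset.univ.filter fun j => ε j = -1).card := by
    refine Finset.card_bij' (fun p _ => p.2) (fun j _ => (σ j, j)) ?_ ?_ ?_ ?_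
    · rintro ⟨i, j⟩ hp
      have hp := (Finset.mem_filter.1 hp).2
      refine Finset.mem_filter.2 ⟨Finset.mem_univ _, ?_⟩
      rw [toM_apply] at hp
      split_ifs at hp with hh
      · exact Units.ext hp
    · intro j hj
      have hj := (Finset.mem_filter.1 hj).2
      refine Finset.mem_filter.2 ⟨Finset.mem_univ _, ?_⟩
      rw [toM_apply, if_pos rfl, hj]
      rfl
    · rintro ⟨i, j⟩ hp
      have hp := (Finset.mem_filter.1 hp).2
      rw [toM_apply] at hp
      split_ifs at hp with hh
      · exact Prod.ext hh rfl
    · intro j _; rfl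
  have h2 : ∏ j, ε j = (-1) ^ (Finset.univ.filter fun j => ε j = -1).card := by
    rw [← Finset.prod_const, Finset.prod_filter]
    refine Finset.prod_congr rfl fun j _ => ?_
    rcases Int.units_eq_one_or (ε j) with h | h <;> simp [h]
  rw [h1, h2]
  constructor
  · intro h; exact h.neg_one_pow
  · intro h
    by_contra hh
    rw [Nat.not_even_iff_odd] at hh
    rw [hh.neg_one_pow] at h
    exact absurd h (by decide)

/-- invertible matrix of a signed permutation -/
def toG {n : ℕ} (σ : Equiv.Perm (Fin n)) (ε : Fin n → ℤˣ) : GL (Fin n) ℤ where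
  val := toM σ ε
  inv := toM σ.symm (fun j => ε (σ.symm j))
  val_inv := by
    rw [toM_mul, ← toM_one]
    congr 1
    · ext; simp
    · funext j; exact Int.units_mul_self _
  inv_val := by
    rw [toM_mul, ← toM_one]
    congr 1
    · ext; simp
    · funext j; simp

theorem toM_comm_iff {n : ℕ} (τ σ σ' : Equiv.Perm (Fin n)) (δ ε ε' : Fin n → ℤˣ) :
    toM τ δ * toM σ ε = toM σ' ε' * toM τ δ ↔ Iso σ ε σ' ε' τ δ := by
  rw [toM_mul, toM_mul]
  constructor
  · intro h
    obtain ⟨h1, h2⟩ := toM_inj h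
    exact ⟨fun x => Equiv.congr_fun h1 x, fun x => congrFun h2 x⟩
  · rintro ⟨h1, h2⟩
    congr 1
    · exact Equiv.ext h1
    · exact funext h2


theorem card_D {n : ℕ} (hn : 0 < n) (D : Subgroup (GL (Fin n) ℤ))
    (hD : ∀ g : GL (Fin n) ℤ, g ∈ D ↔ IsWeylD (g : Matrix (Fin n) (Fin n) ℤ)) :
    Nat.card (ConjClasses D) =
      {M ∈ LS n | sgL M = 1}.ncard + {M ∈ LS n | SplitL M}.ncard := by
  have hrep : ∀ g : D, ∃ (σ : Equiv.Perm (Fin n)) (ε : Fin n → ℤˣ),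
      (g.1 : Matrix (Fin n) (Fin n) ℤ) = toM σ ε := fun g => exists_toM _ ((hD g.1).1 g.2).1
  choose s e hse using hrep
  have he : ∀ g, ∏ x, e g x = 1 := by
    intro g
    rw [← toM_weyl (s g), ← hse]
    exact (hD g.1).1 g.2
  have hs : ∀ σ ε, ∏ x, ε x = 1 → ∃ g, s g = σ ∧ e g = ε := by
    intro σ ε h
    let g : D := ⟨toG σ ε, (hD _).2 ((toM_weyl σ ε).2 h)⟩
    exact ⟨g, toM_inj (hse g).symm⟩
  have hinj : Function.Injective (fun g => (s g, e g)) := by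
    intro g h hgh
    obtain ⟨h1, h2⟩ := Prod.ext_iff.1 hgh
    apply Subtype.ext
    apply Units.ext
    dsimp only at h1 h2
    rw [hse g, hse h, h1, h2]
  have : Finite D := Finite.of_injective _ hinj
  refine count hn D s e he hs ?_
  intro g h
  rw [isConj_iff]
  have key : ∀ c : D, c * g * c⁻¹ = h ↔ Iso (s g) (e g) (s h) (e h) (s c) (e c) := by
    intro c
    rw [mul_inv_eq_iff_eq_mul, ← toM_comm_iff, ← hse, ← hse, ← hse, ← Subtype.coe_inj,
      ← Units.val_inj]
    rfl
  constructor
  · rintro ⟨c, hc⟩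
    exact ⟨s c, e c, (key c).1 hc, he c⟩
  · rintro ⟨τ, δ, h1, h2⟩
    obtain ⟨c, rfl, rfl⟩ := hs τ δ h2
    exact ⟨c, (key c).2 h1⟩

end WC

/-- Let `ℓ` be an odd prime and `n ≥ 2`.  Let `X` be the set of finitely supported functions
`w` assigning to each quadruple `(a, x, 𝔠, j)` an `ℓ`-core partition, subject to
`∑ ℓ^{a + |𝔠|} * |w (a, x, 𝔠, j)| = n`, let `σ` be the involution of `X` given by
`(σ w) (a, x, 𝔠, j) = w (a, 1 - x, 𝔠, j)`, and let `F` be the number of its fixed points.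
Then `2 * F + (|X| - F) / 2` equals the number of conjugacy classes of the Weyl group of
type `D_n`, realised as the group of `n × n` signed permutation matrices with an even
number of entries equal to `-1`. -/
theorem weight_count_SO_even (ℓ : ℕ) (hℓ : ℓ.Prime) (hodd : Odd ℓ) (n : ℕ) (hn : 2 ≤ n)
    (D : Subgroup (GL (Fin n) ℤ))
    (hD : ∀ g : GL (Fin n) ℤ, g ∈ D ↔ IsWeylD (g : Matrix (Fin n) (Fin n) ℤ))
    (X : Set ((ℕ × Fin 2 × Σ c : List ℕ+, Fin ((ℓ - 1) ^ c.length)) →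
        Σ m : ℕ, Nat.Partition m))
    (hX : X = { w | (∀ i, IsCore ℓ (w i).2) ∧
      { i | (w i).1 ≠ 0 }.Finite ∧
      ∑ᶠ i : ℕ × Fin 2 × Σ c : List ℕ+, Fin ((ℓ - 1) ^ c.length),
        ℓ ^ (i.1 + csum i.2.2.1) * (w i).1 = n })
    (F : ℕ) (hF : F = Set.ncard { w ∈ X | w ∘ flipIdx ℓ = w }) :
    2 * F + (Set.ncard X - F) / 2 = Nat.card (ConjClasses D) := by
  subst hX hF
  rw [WC.card_D (by omega) D hD]
  exact WC.comb_half ℓ hℓ.two_le n
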